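/- Let α,β > −1/2 with α − β > −5, and let 0 < ε < π/2. Then there exist constants c⁽¹⁾ > 0 depending only on α,β and C > 0 depending only on ε,α,β such that for every positive integer L and every θ with c⁽¹⁾/L ≤ θ ≤ π − ε, setting L̃ := L + (α+β+2)/2, |v_L^{(α,β)}(1,cos θ) − (2^{−(α+β+1)}/Γ(α+1)) L̃^{α+1/2} m_{α+1,β}(θ) [cos ω_{α+1}(L̃θ) + L̃^{−1} F^{(2)}_{α+1,β}(θ) cos ω_{α+2}(L̃θ)]| ≤ C (2^{−(α+β+1)}/Γ(α+1)) L̃^{α+1/2} m_{α+1,β}(θ) (L^{û(α+1)} θ^{ν̂(α+1)} + L^{−2} θ^{−2}), where F^{(2)}_{γ,η}(θ) := ((η²−γ²)/4) tan(θ/2) − ((4γ²−1)/8) cot θ, û(γ) := −2 + frac(γ+1/2) (frac denotes fractional part), and ν̂(γ) := γ+5/2 if γ < 1/2 and ν̂(γ) := γ+1/2 if γ ≥ 1/2. -/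

import Mathlib

open MeasureTheory Real
open scoped ENNReal NNReal

/-- The classical Jacobi polynomial `P_n^{(a,b)}` (hypergeometric representation,
normalised so that `P_n^{(a,b)}(1) = Γ(n+a+1)/(Γ(n+1)Γ(a+1))`). -/
noncomputable def jacobiP (a b : ℝ) (n : ℕ) (x : ℝ) : ℝ :=
  ∑ s ∈ Finset.range (n + 1),
    (Real.Gamma ((n : ℝ) + a + 1) /
        (Real.Gamma ((s : ℝ) + a + 1) * (Nat.factorial (n - s) : ℝ))) *
      (Real.Gamma ((n : ℝ) + b + 1) /
        (Real.Gamma ((n : ℝ) - (s : ℝ) + b + 1) * (Nat.factorial s : ℝ))) *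
      ((x - 1) / 2) ^ s * ((x + 1) / 2) ^ (n - s)

/-- `M_ℓ^{(a,b)}`, the `L₂(w_{a,b})` normalisation constant of `P_ℓ^{(a,b)}`. -/
noncomputable def jacobiM (a b : ℝ) (ℓ : ℕ) : ℝ :=
  (2 : ℝ) ^ (a + b + 1) / (2 * (ℓ : ℝ) + a + b + 1) *
    (Real.Gamma ((ℓ : ℝ) + a + 1) * Real.Gamma ((ℓ : ℝ) + b + 1)) /
    (Real.Gamma ((ℓ : ℝ) + 1) * Real.Gamma ((ℓ : ℝ) + a + b + 1))

/-- The generalised Dirichlet kernel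
`v_L^{(a,b)}(t,s) = Σ_{ℓ=0}^{L} (M_ℓ^{(a,b)})⁻¹ P_ℓ^{(a,b)}(t) P_ℓ^{(a,b)}(s)`. -/
noncomputable def dirichletJ (a b : ℝ) (L : ℕ) (t s : ℝ) : ℝ :=
  ∑ ℓ ∈ Finset.range (L + 1), (jacobiM a b ℓ)⁻¹ * jacobiP a b ℓ t * jacobiP a b ℓ s

/-- The filtered Jacobi kernel
`v_{L,g}^{(a,b)}(t,s) = Σ_{ℓ=0}^{2L−1} g(ℓ/L) (M_ℓ^{(a,b)})⁻¹ P_ℓ^{(a,b)}(t) P_ℓ^{(a,b)}(s)`. -/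
noncomputable def filteredJ (a b : ℝ) (g : ℝ → ℝ) (L : ℕ) (t s : ℝ) : ℝ :=
  ∑ ℓ ∈ Finset.range (2 * L),
    g ((ℓ : ℝ) / (L : ℝ)) * (jacobiM a b ℓ)⁻¹ * jacobiP a b ℓ t * jacobiP a b ℓ s

/-- `Z(d,ℓ)`, the dimension of the space of spherical harmonics of degree `ℓ` on `S^d`. -/
noncomputable def Zdim (d ℓ : ℕ) : ℝ :=
  (2 * (ℓ : ℝ) + (d : ℝ) - 1) * Real.Gamma ((ℓ : ℝ) + (d : ℝ) - 1) /
    (Real.Gamma (d : ℝ) * Real.Gamma ((ℓ : ℝ) + 1))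

/-- The normalised Legendre polynomial `P_ℓ^{(d+1)}` for `S^d`. -/
noncomputable def normLegendre (d ℓ : ℕ) (t : ℝ) : ℝ :=
  jacobiP (((d : ℝ) - 2) / 2) (((d : ℝ) - 2) / 2) ℓ t /
    jacobiP (((d : ℝ) - 2) / 2) (((d : ℝ) - 2) / 2) ℓ 1

/-- The Dirichlet kernel on `S^d`: `v_L^{(d)}(t) = Σ_{ℓ=0}^L Z(d,ℓ) P_ℓ^{(d+1)}(t)`. -/
noncomputable def sphDirichlet (d L : ℕ) (t : ℝ) : ℝ :=
  ∑ ℓ ∈ Finset.range (L + 1), Zdim d ℓ * normLegendre d ℓ t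

/-- The filtered kernel on `S^d`: `v_{L,g}^{(d)}(t) = Σ_{ℓ=0}^∞ g(ℓ/L) Z(d,ℓ) P_ℓ^{(d+1)}(t)`. -/
noncomputable def sphFiltered (d : ℕ) (g : ℝ → ℝ) (L : ℕ) (t : ℝ) : ℝ :=
  ∑' ℓ : ℕ, g ((ℓ : ℝ) / (L : ℝ)) * Zdim d ℓ * normLegendre d ℓ t

/-- The surface area `|S^n| = 2π^{(n+1)/2}/Γ((n+1)/2)` of the unit sphere `S^n`. -/
noncomputable def sphereArea (n : ℕ) : ℝ :=
  2 * Real.pi ^ (((n : ℝ) + 1) / 2) / Real.Gamma (((n : ℝ) + 1) / 2)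

/-- `m_{a,b}(θ) = π^{−1/2} (sin(θ/2))^{−a−1/2} (cos(θ/2))^{−b−1/2}`. -/
noncomputable def mAB (a b θ : ℝ) : ℝ :=
  Real.pi ^ (-(1 / 2 : ℝ)) * Real.sin (θ / 2) ^ (-a - 1 / 2) *
    Real.cos (θ / 2) ^ (-b - 1 / 2)

/-- `ω_γ(z) = z − γπ/2 − π/4`. -/
noncomputable def omegaA (γ z : ℝ) : ℝ := z - γ * Real.pi / 2 - Real.pi / 4

/-- `F^{(2)}_{a,b}(θ) = ((b²−a²)/4) tan(θ/2) − ((4a²−1)/8) cot θ`. -/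
noncomputable def F2fn (a b θ : ℝ) : ℝ :=
  (b ^ 2 - a ^ 2) / 4 * Real.tan (θ / 2) - (4 * a ^ 2 - 1) / 8 * (Real.cos θ / Real.sin θ)

/-- `û(a) = −2 + frac(a + 1/2)`. -/
noncomputable def uHat (a : ℝ) : ℝ := -2 + Int.fract (a + 1 / 2)

/-- `ν̂(a) = a + 5/2` if `a < 1/2`, and `a + 1/2` if `a ≥ 1/2`. -/
noncomputable def nuHat (a : ℝ) : ℝ := if a < 1 / 2 then a + 5 / 2 else a + 1 / 2

/-!
A contiguous relation telescopes the kernel `v_L^{(α,β)}(1, ·)` into a multiple of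
`P_L^{(α+1,β)}`, so the claim is a two-term asymptotic expansion of `P_n^{(a,b)}(cos θ)`
with `a = α + 1 > 1/2` and relative error `O((n θ)⁻²)`.

Put `N = n + (a+b+1)/2` and `z = N θ`. After multiplication by a power of `z` and a Liouville
weight, the Jacobi equation becomes `U'' + (1 - m/z² + 2 f') U = 0`, where `m = a² - 1/4` and the
phase correction `f(z)` is a smooth function of `θ = z/N` divided by `N`. If `F` solves Bessel's
equation `F'' + (1 - m/z²) F = 0`, then `F + f F'` solves the perturbed equation up to a
defect `O((z⁻² + N⁻¹) N⁻²)`. Both functions are regular at the origin, and an energy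
(Grönwall) estimate gives `U = F + f F' + O(N⁻²)` uniformly for `1 ≤ z ≤ δ N` with `δ < π`.

The leading asymptotics of `F` at infinity come from Poisson's integral by moving the segment
`[-1, 1]` into the upper half-plane, and Bessel's equation itself upgrades them to two terms with
error `O(z⁻²)`. Finally, the Gamma quotient in front is `N ^ (2 a) (1 + O(n⁻²))`.
-/

/-! ### Jacobi polynomials -/

/-- The coefficient of `((x - 1) / 2) ^ s * ((x + 1) / 2) ^ t` in the Jacobi polynomial
`P_{s+t}^{(a,b)}(x)`. -/
noncomputable def jacobiCoeff (a b : ℝ) (s t : ℕ) : ℝ :=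
  Gamma (s + t + a + 1) / (Gamma (s + a + 1) * t.factorial) *
    (Gamma (s + t + b + 1) / (Gamma (t + b + 1) * s.factorial))

section JacobiPolynomials

open Finset.HasAntidiagonal (antidiagonal mem_antidiagonal)
open Finset.Nat (sum_antidiagonal_succ sum_antidiagonal_succ')

variable {a b : ℝ}

lemma jacobiP_eq_sum_antidiagonal (a b : ℝ) (n : ℕ) (x : ℝ) :
    jacobiP a b n x = ∑ p ∈ antidiagonal n,
      jacobiCoeff a b p.1 p.2 * (((x - 1) / 2) ^ p.1 * ((x + 1) / 2) ^ p.2) := by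
  rw [Finset.Nat.sum_antidiagonal_eq_sum_range_succ_mk, jacobiP]
  refine Finset.sum_congr rfl fun s hs => ?_
  have hsn : s ≤ n := Finset.mem_range_succ_iff.1 hs
  rw [jacobiCoeff, Nat.cast_sub hsn, add_sub_cancel, mul_assoc]

lemma jacobiCoeff_comm (a b : ℝ) (s t : ℕ) : jacobiCoeff a b s t = jacobiCoeff b a t s := by
  rw [jacobiCoeff, jacobiCoeff, mul_comm, add_comm (s : ℝ) t]

lemma jacobiCoeff_add_one_left (ha : -1 < a) (s t : ℕ) :
    (s + a + 1) * jacobiCoeff (a + 1) b s t = (s + t + a + 1) * jacobiCoeff a b s t := by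
  have hs : 0 < s + a + 1 := by linarith [s.cast_nonneg (α := ℝ)]
  have hst : 0 < s + t + a + 1 := by linarith [t.cast_nonneg (α := ℝ)]
  have hΓ := (Gamma_pos_of_pos hs).ne'
  rw [jacobiCoeff, jacobiCoeff, ← add_assoc, Gamma_add_one hst.ne', ← add_assoc,
    Gamma_add_one hs.ne']
  field_simp

lemma succ_mul_jacobiCoeff_succ_left (hb : -1 < b) (s t : ℕ) :
    (s + 1) * jacobiCoeff a b (s + 1) t = (s + t + b + 1) * jacobiCoeff (a + 1) b s t := by
  have hst : 0 < s + t + b + 1 := by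
    linarith [s.cast_nonneg (α := ℝ), t.cast_nonneg (α := ℝ)]
  rw [jacobiCoeff, jacobiCoeff, Nat.factorial_succ]
  push_cast
  rw [show (s + 1 + t + b + 1 : ℝ) = s + t + b + 1 + 1 by ring, Gamma_add_one hst.ne',
    show (s + 1 + t + a + 1 : ℝ) = s + t + (a + 1) + 1 by ring, add_right_comm (s : ℝ) 1 a,
    add_assoc (s : ℝ) a 1]
  field_simp

lemma succ_mul_jacobiCoeff_succ_left' (hb : -1 < b) (s t : ℕ) :
    (s + 1) * jacobiCoeff a b (s + 1) t = (t + b + 1) * jacobiCoeff (a + 1) (b + 1) s t := by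
  rw [succ_mul_jacobiCoeff_succ_left hb, jacobiCoeff_comm, jacobiCoeff_comm (a + 1),
    jacobiCoeff_add_one_left hb, add_comm (s : ℝ)]

lemma succ_mul_jacobiCoeff_succ_right (ha : -1 < a) (s t : ℕ) :
    (t + 1) * jacobiCoeff a b s (t + 1) = (s + a + 1) * jacobiCoeff (a + 1) (b + 1) s t := by
  rw [jacobiCoeff_comm, succ_mul_jacobiCoeff_succ_left' ha, jacobiCoeff_comm]

lemma sum_antidiagonal_succ_jacobiCoeff_mul (ha : -1 < a) (hb : -1 < b) (n : ℕ)
    (f g : ℕ → ℕ → ℝ) :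
    ∑ p ∈ antidiagonal (n + 1), jacobiCoeff a b p.1 p.2 * (p.1 * f p.1 p.2 + p.2 * g p.1 p.2) =
      ∑ p ∈ antidiagonal n, jacobiCoeff (a + 1) (b + 1) p.1 p.2 *
        ((p.2 + b + 1) * f (p.1 + 1) p.2 + (p.1 + a + 1) * g p.1 (p.2 + 1)) := by
  simp only [mul_add _ (_ * f _ _), Finset.sum_add_distrib]
  rw [sum_antidiagonal_succ, sum_antidiagonal_succ']
  push_cast
  simp only [zero_mul, mul_zero, zero_add]
  congr 1 <;> refine Finset.sum_congr rfl fun p _ => ?_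
  · linear_combination f (p.1 + 1) p.2 * succ_mul_jacobiCoeff_succ_left' (a := a) hb p.1 p.2
  · linear_combination g p.1 (p.2 + 1) * succ_mul_jacobiCoeff_succ_right (b := b) ha p.1 p.2

lemma hasDerivAt_pow_mul_pow (s t : ℕ) (x : ℝ) :
    HasDerivAt (fun x : ℝ => ((x - 1) / 2) ^ s * ((x + 1) / 2) ^ t)
      ((s * (((x - 1) / 2) ^ (s - 1) * ((x + 1) / 2) ^ t) +
        t * (((x - 1) / 2) ^ s * ((x + 1) / 2) ^ (t - 1))) / 2) x := by
  have hX : HasDerivAt (fun x : ℝ => (x - 1) / 2) (1 / 2) x :=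
    ((hasDerivAt_id x).sub_const 1).div_const 2
  have hY : HasDerivAt (fun x : ℝ => (x + 1) / 2) (1 / 2) x :=
    ((hasDerivAt_id x).add_const 1).div_const 2
  exact ((hX.fun_pow s).fun_mul (hY.fun_pow t)).congr_deriv (by ring)

lemma hasDerivAt_jacobiP (a b : ℝ) (n : ℕ) (x : ℝ) :
    HasDerivAt (jacobiP a b n) (∑ p ∈ antidiagonal n, jacobiCoeff a b p.1 p.2 *
      ((p.1 * (((x - 1) / 2) ^ (p.1 - 1) * ((x + 1) / 2) ^ p.2) +
        p.2 * (((x - 1) / 2) ^ p.1 * ((x + 1) / 2) ^ (p.2 - 1))) / 2)) x := by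
  rw [funext (jacobiP_eq_sum_antidiagonal a b n)]
  exact HasDerivAt.fun_sum fun p _ => (hasDerivAt_pow_mul_pow p.1 p.2 x).const_mul _

lemma hasDerivAt_jacobiP_succ (ha : -1 < a) (hb : -1 < b) (n : ℕ) (x : ℝ) :
    HasDerivAt (jacobiP a b (n + 1)) ((n + a + b + 2) / 2 * jacobiP (a + 1) (b + 1) n x) x := by
  refine (hasDerivAt_jacobiP a b (n + 1) x).congr_deriv ?_
  have hsum := sum_antidiagonal_succ_jacobiCoeff_mul ha hb n
    (fun s t => ((x - 1) / 2) ^ (s - 1) * ((x + 1) / 2) ^ t)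
    (fun s t => ((x - 1) / 2) ^ s * ((x + 1) / 2) ^ (t - 1))
  simp only [Nat.add_sub_cancel] at hsum
  simp only [← mul_div_assoc]
  rw [← Finset.sum_div, hsum, Finset.sum_div, jacobiP_eq_sum_antidiagonal, Finset.mul_sum]
  refine Finset.sum_congr rfl fun p hp => ?_
  rw [← mem_antidiagonal.1 hp]
  push_cast
  ring

lemma one_sub_sq_mul_deriv_jacobiP_add (ha : -1 < a) (hb : -1 < b) (n : ℕ) (x : ℝ) :
    (1 - x ^ 2) * deriv (jacobiP (a + 1) (b + 1) n) x +
        (b - a - (a + b + 2) * x) * jacobiP (a + 1) (b + 1) n x =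
      -2 * (n + 1) * jacobiP a b (n + 1) x := by
  have hdeg : (n + 1) * jacobiP a b (n + 1) x =
      ∑ p ∈ antidiagonal n, jacobiCoeff (a + 1) (b + 1) p.1 p.2 *
        ((p.2 + b + 1) * (((x - 1) / 2) ^ (p.1 + 1) * ((x + 1) / 2) ^ p.2) +
          (p.1 + a + 1) * (((x - 1) / 2) ^ p.1 * ((x + 1) / 2) ^ (p.2 + 1))) := by
    rw [← sum_antidiagonal_succ_jacobiCoeff_mul ha hb n
        (fun s t => ((x - 1) / 2) ^ s * ((x + 1) / 2) ^ t)
        (fun s t => ((x - 1) / 2) ^ s * ((x + 1) / 2) ^ t),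
      jacobiP_eq_sum_antidiagonal, Finset.mul_sum]
    refine Finset.sum_congr rfl fun p hp => ?_
    rw [← Nat.cast_add_one, ← mem_antidiagonal.1 hp]
    push_cast
    ring
  rw [mul_assoc, hdeg, (hasDerivAt_jacobiP _ _ n x).deriv, jacobiP_eq_sum_antidiagonal,
    Finset.mul_sum, Finset.mul_sum, Finset.mul_sum, ← Finset.sum_add_distrib]
  refine Finset.sum_congr rfl fun p _ => ?_
  have hpow (y : ℝ) (k : ℕ) : k * y ^ k = y * (k * y ^ (k - 1)) := by
    cases k with
    | zero => simp
    | succ k => simp only [Nat.add_sub_cancel]; ring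
  linear_combination 2 * jacobiCoeff (a + 1) (b + 1) p.1 p.2 *
    (((x - 1) / 2) ^ (p.1 + 1) * hpow ((x + 1) / 2) p.2 +
      ((x + 1) / 2) ^ (p.2 + 1) * hpow ((x - 1) / 2) p.1)

lemma jacobiP_zero (ha : -1 < a) (hb : -1 < b) (x : ℝ) : jacobiP a b 0 x = 1 := by
  have hΓa := (Gamma_pos_of_pos (neg_lt_iff_pos_add.1 ha)).ne'
  have hΓb := (Gamma_pos_of_pos (neg_lt_iff_pos_add.1 hb)).ne'
  simp [jacobiP, hΓa, hΓb]

lemma jacobiP_one (hb : -1 < b) (n : ℕ) :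
    jacobiP a b n 1 = Gamma (n + a + 1) / (Gamma (a + 1) * n.factorial) := by
  have hΓ : Gamma (n + b + 1) ≠ 0 :=
    (Gamma_pos_of_pos (by linarith [n.cast_nonneg (α := ℝ)])).ne'
  rw [jacobiP, Finset.sum_range_succ', Finset.sum_eq_zero (by simp)]
  simp [hΓ]

lemma contDiff_jacobiP (a b : ℝ) (n : ℕ) : ContDiff ℝ ⊤ (jacobiP a b n) := by
  unfold jacobiP
  fun_prop

/- The derivative of `P_{n+1}^{(a,b)}` is a multiple of `P_n^{(a+1,b+1)}`, and
`one_sub_sq_mul_deriv_jacobiP_add` returns to the parameters `(a, b)`. -/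
theorem jacobiP_ode (ha : -1 < a) (hb : -1 < b) (n : ℕ) (x : ℝ) :
    (1 - x ^ 2) * deriv (deriv (jacobiP a b n)) x +
        (b - a - (a + b + 2) * x) * deriv (jacobiP a b n) x +
      n * (n + a + b + 1) * jacobiP a b n x = 0 := by
  cases n with
  | zero => simp [funext (jacobiP_zero ha hb)]
  | succ n =>
    rw [funext fun x => (hasDerivAt_jacobiP_succ ha hb n x).deriv, deriv_const_mul_field]
    push_cast
    linear_combination
      (n + a + b + 2) / 2 * one_sub_sq_mul_deriv_jacobiP_add ha hb n x

lemma jacobiP_contiguous (ha : -1 < a) (hb : -1 < b) (n : ℕ) (x : ℝ) :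
    (2 * n + a + b + 3) * jacobiP a b (n + 1) x =
      (n + a + b + 2) * jacobiP (a + 1) b (n + 1) x - (n + b + 1) * jacobiP (a + 1) b n x := by
  have hpos (s : ℕ) : (s + a + 1 : ℝ) ≠ 0 := by linarith [s.cast_nonneg (α := ℝ)]
  have hX : (n + b + 1) * ((x - 1) / 2 * jacobiP (a + 1) b n x) =
      ∑ p ∈ antidiagonal (n + 1), p.1 * (jacobiCoeff a b p.1 p.2 *
        (((x - 1) / 2) ^ p.1 * ((x + 1) / 2) ^ p.2)) := by
    rw [sum_antidiagonal_succ, jacobiP_eq_sum_antidiagonal, Finset.mul_sum, Finset.mul_sum,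
      Nat.cast_zero, zero_mul, zero_add]
    refine Finset.sum_congr rfl fun p hp => ?_
    have hcoeff := succ_mul_jacobiCoeff_succ_left (a := a) hb p.1 p.2
    rw [← mem_antidiagonal.1 hp]
    push_cast
    linear_combination -((x - 1) / 2) ^ (p.1 + 1) * ((x + 1) / 2) ^ p.2 * hcoeff
  have hY : (n + b + 1) * ((x + 1) / 2 * jacobiP (a + 1) b n x) =
      ∑ p ∈ antidiagonal (n + 1), p.2 * ((p.2 + b) / (p.1 + a + 1) * (jacobiCoeff a b p.1 p.2 *
        (((x - 1) / 2) ^ p.1 * ((x + 1) / 2) ^ p.2))) := by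
    rw [sum_antidiagonal_succ', jacobiP_eq_sum_antidiagonal, Finset.mul_sum, Finset.mul_sum,
      Nat.cast_zero, zero_mul, zero_add]
    refine Finset.sum_congr rfl fun p hp => ?_
    have hcoeff : (p.1 + p.2 + b + 1) * jacobiCoeff (a + 1) b p.1 p.2 =
        (p.2 + 1) * ((p.2 + 1 + b) / (p.1 + a + 1) * jacobiCoeff a b p.1 (p.2 + 1)) := by
      have := hpos p.1
      rw [← succ_mul_jacobiCoeff_succ_left hb, succ_mul_jacobiCoeff_succ_left' hb, mul_left_comm,
        succ_mul_jacobiCoeff_succ_right ha]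
      field_simp
      ring
    rw [← mem_antidiagonal.1 hp]
    push_cast
    linear_combination ((x - 1) / 2) ^ p.1 * ((x + 1) / 2) ^ (p.2 + 1) * hcoeff
  have hsplit : jacobiP (a + 1) b n x =
      (x + 1) / 2 * jacobiP (a + 1) b n x - (x - 1) / 2 * jacobiP (a + 1) b n x := by ring
  rw [hsplit, mul_sub, hX, hY, jacobiP_eq_sum_antidiagonal, jacobiP_eq_sum_antidiagonal,
    Finset.mul_sum, Finset.mul_sum, ← Finset.sum_sub_distrib, ← Finset.sum_sub_distrib]
  refine Finset.sum_congr rfl fun p hp => ?_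
  have hn : (n : ℝ) = p.1 + p.2 - 1 := by
    rw [eq_sub_iff_add_eq]
    exact_mod_cast (mem_antidiagonal.1 hp).symm
  have hcoeff := jacobiCoeff_add_one_left (b := b) ha p.1 p.2
  have := hpos p.1
  rw [hn]
  field_simp
  linear_combination (-(p.1 + p.2 + a + b + 1)) *
    (((x - 1) / 2) ^ p.1 * ((x + 1) / 2) ^ p.2) * hcoeff

lemma inv_jacobiM_mul_jacobiP_one (ha : -1 < a) (hb : -1 < b) (n : ℕ) :
    (jacobiM a b n)⁻¹ * jacobiP a b n 1 = 2 ^ (-(a + b + 1)) / Gamma (a + 1) *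
      (Gamma (n + a + b + 1) / Gamma (n + b + 1)) * (2 * n + a + b + 1) := by
  have hn : (0 : ℝ) ≤ n := n.cast_nonneg
  have hΓ₁ := (Gamma_pos_of_pos (s := n + a + 1) (by linarith [hn])).ne'
  have hΓ₂ := (Gamma_pos_of_pos (s := n + b + 1) (by linarith [hn])).ne'
  have hΓ₃ := (Gamma_pos_of_pos (s := a + 1) (by linarith)).ne'
  have hfac : (n.factorial : ℝ) ≠ 0 := by positivity
  have hpow : (2 : ℝ) ^ (a + b + 1) ≠ 0 := by positivity
  rw [jacobiP_one hb, jacobiM, Gamma_nat_eq_factorial, rpow_neg zero_le_two]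
  field_simp

theorem dirichletJ_one_eq (ha : -1 < a) (hb : -1 < b) (hab : a + b ≠ -1) (L : ℕ) (x : ℝ) :
    dirichletJ a b L 1 x = 2 ^ (-(a + b + 1)) / Gamma (a + 1) *
      (Gamma (L + a + b + 2) / Gamma (L + b + 1)) * jacobiP (a + 1) b L x := by
  simp only [dirichletJ, inv_jacobiM_mul_jacobiP_one ha hb]
  induction L with
  | zero =>
    have hΓ := Gamma_add_one (s := a + b + 1) fun h => hab (by linarith)
    rw [Finset.sum_range_one, jacobiP_zero ha hb, jacobiP_zero (by linarith) hb]
    simp only [Nat.cast_zero, zero_add, mul_zero, show a + b + 2 = a + b + 1 + 1 by ring, hΓ]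
    ring
  | succ n ih =>
    have hn : (0 : ℝ) ≤ n := n.cast_nonneg
    have hb' : 0 < n + b + 1 := by linarith [hn]
    have hΓb := (Gamma_pos_of_pos hb').ne'
    rw [Finset.sum_range_succ, ih]
    push_cast
    rw [add_right_comm (n : ℝ) 1 b, Gamma_add_one hb'.ne',
      show n + 1 + a + b + 2 = n + a + b + 2 + 1 by ring,
      Gamma_add_one (s := n + a + b + 2) (by linarith [hn]),
      show n + 1 + a + b + 1 = n + a + b + 2 by ring]
    field_simp
    linear_combination
      Gamma (n + a + b + 2) * (Gamma (a + 1))⁻¹ * jacobiP_contiguous ha hb n x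

end JacobiPolynomials

open Filter Set Topology

/-! ### Poisson's integral for Bessel functions -/

lemma hasDerivAt_integral_mul_comp_mul {w f f' : ℝ → ℝ} {a b C : ℝ}
    (hw : IntervalIntegrable w volume a b) (hf : ∀ x, HasDerivAt f (f' x) x)
    (hf' : Continuous f') (hC : ∀ x, |f' x| ≤ C) (z : ℝ) :
    HasDerivAt (fun z : ℝ => ∫ t in a..b, w t * f (z * t))
      (∫ t in a..b, w t * (f' (z * t) * t)) z := by
  have hfc : Continuous f := continuous_iff_continuousAt.2 fun x => (hf x).continuousAt
  have hF (x : ℝ) : IntervalIntegrable (fun t => w t * f (x * t)) volume a b :=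
    hw.mul_continuousOn (by fun_prop)
  have hF' : IntervalIntegrable (fun t => w t * (f' (z * t) * t)) volume a b :=
    hw.mul_continuousOn (by fun_prop)
  refine (intervalIntegral.hasDerivAt_integral_of_dominated_loc_of_deriv_le
    (F := fun z t => w t * f (z * t)) (F' := fun z t => w t * (f' (z * t) * t))
    (s := univ) (bound := fun t => ‖w t‖ * (C * |t|)) univ_mem
    (.of_forall fun x => (hF x).def'.aestronglyMeasurable) (hF z) hF'.def'.aestronglyMeasurable
    (.of_forall fun t _ x _ => ?_) (hw.norm.mul_continuousOn (by fun_prop))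
    (.of_forall fun t _ x _ => ?_)).2
  · rw [norm_mul, Real.norm_eq_abs (f' _ * t), abs_mul]
    gcongr
    exact hC _
  · exact ((hf (x * t)).comp x (hasDerivAt_mul_const t)).const_mul (w t)

/-- The weight `(1 - t²)^μ` of Poisson's integral. -/
noncomputable def poissonWeight (μ t : ℝ) : ℝ := (1 - t ^ 2) ^ μ

/-- Poisson's integral `∫_{-1}^{1} (1 - t²)^μ cos (z t) dt`, which for `z > 0` is
`√π Γ(μ + 1) (2 / z)^(μ + 1/2) J_{μ + 1/2}(z)`; it stands in for the Bessel function. -/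
noncomputable def poissonBessel (μ z : ℝ) : ℝ :=
  ∫ t in (-1 : ℝ)..1, poissonWeight μ t * cos (z * t)

/-- The derivative of `poissonBessel μ`. -/
noncomputable def poissonBesselDeriv (μ z : ℝ) : ℝ :=
  ∫ t in (-1 : ℝ)..1, poissonWeight μ t * (-sin (z * t) * t)

section PoissonBessel

variable {μ : ℝ}

@[fun_prop]
lemma continuous_poissonWeight (hμ : 0 ≤ μ) : Continuous (poissonWeight μ) :=
  Continuous.rpow_const (by fun_prop) fun _ => Or.inr hμ

lemma poissonWeight_nonneg {t : ℝ} (ht : t ∈ Icc (-1 : ℝ) 1) : 0 ≤ poissonWeight μ t :=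
  rpow_nonneg (by nlinarith [ht.1, ht.2]) _

lemma poissonWeight_add_one {t : ℝ} (hμ : 0 ≤ μ) (ht : t ∈ Icc (-1 : ℝ) 1) :
    poissonWeight (μ + 1) t = poissonWeight μ t * (1 - t ^ 2) :=
  rpow_add_one' (by nlinarith [ht.1, ht.2]) (by positivity)

lemma hasDerivAt_poissonWeight_add_one (hμ : 0 ≤ μ) (t : ℝ) :
    HasDerivAt (poissonWeight (μ + 1)) (-(2 * (μ + 1)) * (t * poissonWeight μ t)) t := by
  have h : HasDerivAt (fun t : ℝ => 1 - t ^ 2) (-(2 * t)) t := by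
    simpa using (hasDerivAt_pow 2 t).const_sub 1
  refine (h.rpow_const (p := μ + 1) (Or.inr (by linarith))).congr_deriv ?_
  rw [poissonWeight, add_sub_cancel_right]
  ring

lemma hasDerivAt_poissonBessel (hμ : 0 ≤ μ) (z : ℝ) :
    HasDerivAt (poissonBessel μ) (poissonBesselDeriv μ z) z :=
  hasDerivAt_integral_mul_comp_mul ((continuous_poissonWeight hμ).intervalIntegrable _ _)
    hasDerivAt_cos (by fun_prop) (fun x => (abs_neg _).trans_le (abs_sin_le_one x)) z

-- Integration by parts, with `poissonWeight (μ + 1)` as the primitive of `t (1 - t²)^μ`.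
lemma poissonBesselDeriv_mul (hμ : 0 ≤ μ) (z : ℝ) :
    2 * (μ + 1) * poissonBesselDeriv μ z = -(z * poissonBessel (μ + 1) z) := by
  have hparts := intervalIntegral.integral_mul_deriv_eq_deriv_mul (a := (-1 : ℝ)) (b := 1)
    (fun t _ => hasDerivAt_poissonWeight_add_one hμ t)
    (fun t _ => (hasDerivAt_sin (z * t)).comp t (hasDerivAt_const_mul z))
    ((by fun_prop : Continuous fun t => -(2 * (μ + 1)) * (t * poissonWeight μ t)).intervalIntegrable
      _ _)
    ((by fun_prop : Continuous fun t => cos (z * t) * z).intervalIntegrable _ _)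
  have hend : poissonWeight (μ + 1) 1 = 0 ∧ poissonWeight (μ + 1) (-1) = 0 := by
    simp [poissonWeight, zero_rpow (by positivity : μ + 1 ≠ 0)]
  simp only [hend, Function.comp_apply, zero_mul, sub_zero, zero_sub] at hparts
  have hleft : ∫ t in (-1 : ℝ)..1, poissonWeight (μ + 1) t * (cos (z * t) * z) =
      z * poissonBessel (μ + 1) z := by
    rw [poissonBessel, ← intervalIntegral.integral_const_mul]
    exact intervalIntegral.integral_congr fun t _ => by ring
  have hright : ∫ t in (-1 : ℝ)..1, -(2 * (μ + 1)) * (t * poissonWeight μ t) * sin (z * t) =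
      2 * (μ + 1) * poissonBesselDeriv μ z := by
    rw [poissonBesselDeriv, ← intervalIntegral.integral_const_mul]
    exact intervalIntegral.integral_congr fun t _ => by ring
  linarith

lemma hasDerivAt_poissonBesselDeriv (hμ : 0 ≤ μ) {z : ℝ} (hz : z ≠ 0) :
    HasDerivAt (poissonBesselDeriv μ)
      (-(2 * (μ + 1) / z) * poissonBesselDeriv μ z - poissonBessel μ z) z := by
  have hderiv := hasDerivAt_integral_mul_comp_mul (f := fun x => -sin x) (f' := fun x => -cos x)
    (w := fun t => poissonWeight μ t * t)
    ((by fun_prop : Continuous fun t => poissonWeight μ t * t).intervalIntegrable (-1) 1)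
    (fun x => (hasDerivAt_sin x).neg) (by fun_prop)
    (fun x => (abs_neg _).trans_le (abs_cos_le_one x)) z
  have hfun : poissonBesselDeriv μ =
      fun z => ∫ t in (-1 : ℝ)..1, poissonWeight μ t * t * -sin (z * t) := by
    funext z
    exact intervalIntegral.integral_congr fun t _ => by ring
  have hval : ∫ t in (-1 : ℝ)..1, poissonWeight μ t * t * (-cos (z * t) * t) =
      poissonBessel (μ + 1) z - poissonBessel μ z := by
    rw [poissonBessel, poissonBessel, ← intervalIntegral.integral_sub]
    · refine intervalIntegral.integral_congr fun t ht => ?_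
      rw [uIcc_of_le (by norm_num)] at ht
      simp only [poissonWeight_add_one hμ ht]
      ring
    · have : 0 ≤ μ + 1 := by positivity
      exact (by fun_prop : Continuous _).intervalIntegrable _ _
    · exact (by fun_prop : Continuous _).intervalIntegrable _ _
  rw [← hfun, hval] at hderiv
  refine hderiv.congr_deriv ?_
  field_simp
  linear_combination poissonBesselDeriv_mul hμ z

lemma poissonBessel_zero_pos (hμ : 0 ≤ μ) : 0 < poissonBessel μ 0 := by
  refine intervalIntegral.intervalIntegral_pos_of_pos_on
    ((by fun_prop : Continuous _).intervalIntegrable _ _) (fun t ht => ?_) (by norm_num)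
  have : 0 < 1 - t ^ 2 := by nlinarith [ht.1, ht.2]
  simpa [poissonWeight] using rpow_pos_of_pos this μ

lemma abs_poissonBessel_le (hμ : 0 ≤ μ) (z : ℝ) : |poissonBessel μ z| ≤ poissonBessel μ 0 := by
  refine (intervalIntegral.abs_integral_le_integral_abs (by norm_num)).trans <|
    intervalIntegral.integral_mono_on (by norm_num)
      ((by fun_prop : Continuous _).intervalIntegrable _ _)
      ((by fun_prop : Continuous _).intervalIntegrable _ _) fun t ht => ?_
  rw [abs_mul, abs_of_nonneg (poissonWeight_nonneg ht), zero_mul, cos_zero]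
  exact mul_le_mul_of_nonneg_left (abs_cos_le_one _) (poissonWeight_nonneg ht)

lemma poissonBesselDeriv_zero (μ : ℝ) : poissonBesselDeriv μ 0 = 0 := by
  simp [poissonBesselDeriv]

lemma integral_rpow_mul_one_sub_rpow {u v : ℝ} (hu : 0 < u) (hv : 0 < v) :
    ∫ x in (0 : ℝ)..1, x ^ (u - 1) * (1 - x) ^ (v - 1) = Gamma u * Gamma v / Gamma (u + v) := by
  have hbeta : Complex.betaIntegral u v =
      ((∫ x in (0 : ℝ)..1, x ^ (u - 1) * (1 - x) ^ (v - 1) : ℝ) : ℂ) := by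
    rw [Complex.betaIntegral, ← intervalIntegral.integral_ofReal]
    refine intervalIntegral.integral_congr fun x hx => ?_
    rw [uIcc_of_le zero_le_one] at hx
    simp [Complex.ofReal_cpow hx.1, Complex.ofReal_cpow (sub_nonneg.2 hx.2)]
  rw [Complex.betaIntegral_eq_Gamma_mul_div _ _ (by simpa) (by simpa), ← Complex.ofReal_add]
    at hbeta
  simp only [Complex.Gamma_ofReal] at hbeta
  exact_mod_cast hbeta.symm

lemma poissonBessel_zero_mul_Gamma (hμ : 0 ≤ μ) :
    poissonBessel μ 0 * Gamma (μ + 3 / 2) = √π * Gamma (μ + 1) := by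
  have hsubst : poissonBessel μ 0 = 2 * ∫ x in (0 : ℝ)..1, poissonWeight μ (2 * x - 1) := by
    rw [intervalIntegral.mul_integral_comp_mul_sub]
    norm_num [poissonBessel]
  have hweight : ∫ x in (0 : ℝ)..1, poissonWeight μ (2 * x - 1) =
      4 ^ μ * ∫ x in (0 : ℝ)..1, x ^ (μ + 1 - 1) * (1 - x) ^ (μ + 1 - 1) := by
    rw [← intervalIntegral.integral_const_mul]
    refine intervalIntegral.integral_congr fun x hx => ?_
    rw [uIcc_of_le zero_le_one] at hx
    have hx' : 0 ≤ 1 - x := sub_nonneg.2 hx.2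
    simp only [poissonWeight, add_sub_cancel_right]
    rw [← mul_rpow hx.1 hx', ← mul_rpow (by norm_num) (mul_nonneg hx.1 hx')]
    ring_nf
  have hμ1 : 0 < μ + 1 := by positivity
  have hdup := Gamma_mul_Gamma_add_half (μ + 1)
  rw [show μ + 1 + 1 / 2 = μ + 3 / 2 by ring, show 2 * (μ + 1) = μ + 1 + (μ + 1) by ring] at hdup
  have hpow : 2 * (4 : ℝ) ^ μ * 2 ^ (1 - (μ + 1 + (μ + 1))) = 1 := by
    rw [show (4 : ℝ) = 2 ^ (2 : ℝ) by norm_num, ← rpow_mul zero_le_two, ← rpow_one_add' zero_le_two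
      (by positivity), ← rpow_add two_pos]
    ring_nf
    exact rpow_zero 2
  have : Gamma (μ + 1 + (μ + 1)) ≠ 0 := (Gamma_pos_of_pos (by positivity)).ne'
  rw [hsubst, hweight, integral_rpow_mul_one_sub_rpow hμ1 hμ1]
  calc 2 * (4 ^ μ * (Gamma (μ + 1) * Gamma (μ + 1) / Gamma (μ + 1 + (μ + 1)))) * Gamma (μ + 3 / 2)
      = 2 * 4 ^ μ * Gamma (μ + 1) * (Gamma (μ + 1) * Gamma (μ + 3 / 2)) /
          Gamma (μ + 1 + (μ + 1)) := by ring
    _ = 2 * 4 ^ μ * 2 ^ (1 - (μ + 1 + (μ + 1))) * √π * Gamma (μ + 1) := by rw [hdup]; field_simp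
    _ = √π * Gamma (μ + 1) := by rw [hpow, one_mul]

end PoissonBessel

/-! ### The leading asymptotics of Poisson's integral -/

lemma ofReal_mul_cpow {r : ℝ} (hr : 0 < r) {w : ℂ} (hw : w ≠ 0) (μ : ℝ) :
    ((r : ℂ) * w) ^ (μ : ℂ) = ((r ^ μ : ℝ) : ℂ) * w ^ (μ : ℂ) := by
  have hr' : (r : ℂ) ≠ 0 := by exact_mod_cast hr.ne'
  rw [Complex.cpow_def_of_ne_zero (mul_ne_zero hr' hw), Complex.cpow_def_of_ne_zero hw,
    Complex.log_ofReal_mul hr hw, add_mul, Complex.exp_add, Complex.ofReal_cpow hr.le,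
    Complex.cpow_def_of_ne_zero hr', Complex.ofReal_log hr.le]

/-- The truncated Laplace transform `∫_0^1 (y (y + σ))^μ e^{-z y} dy`. For `σ = ±2i` these are the
vertical sides of the contour to which Poisson's integral is deformed. -/
noncomputable def laplaceIntegral (μ : ℝ) (σ : ℂ) (z : ℝ) : ℂ :=
  ∫ y in (0 : ℝ)..1, ((y : ℂ) * (y + σ)) ^ (μ : ℂ) * (exp (-(z * y)) : ℝ)

/-- The holomorphic integrand `(1 - w²)^μ e^{i z w}` of Poisson's integral. -/
noncomputable def poissonIntegrand (μ z : ℝ) (w : ℂ) : ℂ :=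
  (1 - w ^ 2) ^ (μ : ℂ) * Complex.exp (Complex.I * z * w)

section LaplaceIntegral

variable {μ : ℝ} {σ : ℂ}

lemma continuous_ofReal_add_cpow (hμ : 0 < μ) (hσ : σ.im ≠ 0) :
    Continuous fun x : ℝ => ((x : ℂ) + σ) ^ (μ : ℂ) :=
  continuous_iff_continuousAt.2 fun x =>
    ContinuousAt.comp (f := fun x : ℝ => (x : ℂ) + σ) (g := fun w : ℂ => w ^ (μ : ℂ))
      (Complex.continuousAt_cpow_const_of_re_pos (Or.inr (by simpa using hσ)) (by simpa using hμ))
      (by fun_prop)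

-- Substituting `y = r / z` isolates the factor `z ^ (-(μ + 1))`.
lemma rpow_mul_laplaceIntegral (hσ : σ.im ≠ 0) {z : ℝ} (hz : 0 < z) :
    ((z ^ (μ + 1) : ℝ) : ℂ) * laplaceIntegral μ σ z =
      ∫ r in Ioi (0 : ℝ), (Ioc 0 z).indicator
        (fun r : ℝ => ((exp (-r) * r ^ μ : ℝ) : ℂ) * (((r / z : ℝ) : ℂ) + σ) ^ (μ : ℂ)) r := by
  have hσ' (y : ℝ) : (y : ℂ) + σ ≠ 0 := fun h => hσ (by simpa using congrArg Complex.im h)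
  have hsubst := intervalIntegral.integral_comp_div (a := 0) (b := z)
    (fun y : ℝ => ((y : ℂ) * (y + σ)) ^ (μ : ℂ) * ((exp (-(z * y)) : ℝ) : ℂ)) hz.ne'
  rw [zero_div, div_self hz.ne'] at hsubst
  rw [setIntegral_indicator measurableSet_Ioc, inter_eq_self_of_subset_right Ioc_subset_Ioi_self,
    rpow_add_one hz.ne', Complex.ofReal_mul, mul_assoc, laplaceIntegral,
    ← Complex.real_smul (x := z), ← hsubst, ← intervalIntegral.integral_of_le hz.le,
    ← intervalIntegral.integral_const_mul]
  refine intervalIntegral.integral_congr_ae (.of_forall fun r hr => ?_)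
  rw [uIoc_of_le hz.le] at hr
  have hzμ : ((z ^ μ : ℝ) : ℂ) ≠ 0 := by exact_mod_cast (rpow_pos_of_pos hz μ).ne'
  rw [ofReal_mul_cpow (div_pos hr.1 hz) (hσ' _), div_rpow hr.1.le hz.le, mul_div_cancel₀ r hz.ne']
  push_cast
  field_simp

lemma tendsto_rpow_mul_laplaceIntegral (hμ : 0 < μ) (hσ : σ.im ≠ 0) :
    Tendsto (fun z : ℝ => ((z ^ (μ + 1) : ℝ) : ℂ) * laplaceIntegral μ σ z) atTop
      (𝓝 (Gamma (μ + 1) * σ ^ (μ : ℂ))) := by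
  refine Tendsto.congr' ((eventually_gt_atTop 0).mono fun z hz =>
    (rpow_mul_laplaceIntegral hσ hz).symm) ?_
  have hlim : (Gamma (μ + 1) : ℂ) * σ ^ (μ : ℂ) =
      ∫ r in Ioi (0 : ℝ), ((exp (-r) * r ^ μ : ℝ) : ℂ) * σ ^ (μ : ℂ) := by
    rw [integral_mul_const, integral_complex_ofReal, Gamma_eq_integral (by positivity),
      add_sub_cancel_right]
  have hint : IntegrableOn (fun r : ℝ => exp (-r) * r ^ μ) (Ioi 0) := by
    simpa using GammaIntegral_convergent (s := μ + 1) (by positivity)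
  have hcont := continuous_ofReal_add_cpow hμ hσ
  rw [hlim]
  refine tendsto_integral_filter_of_dominated_convergence
    (fun r => exp (-r) * r ^ μ * (1 + ‖σ‖) ^ μ) ?_ ?_ (hint.mul_const _) ?_
  · refine .of_forall fun z => (Continuous.aestronglyMeasurable ?_).indicator measurableSet_Ioc
    have hrpow := continuous_rpow_const hμ.le
    exact (by fun_prop : Continuous fun r : ℝ => ((exp (-r) * r ^ μ : ℝ) : ℂ)).mul
      (hcont.comp (continuous_id.div_const z))
  · filter_upwards [eventually_gt_atTop 0] with z hz
    refine (ae_restrict_iff' measurableSet_Ioi).2 (.of_forall fun r (hr : 0 < r) => ?_)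
    by_cases hrz : r ∈ Ioc 0 z
    · rw [indicator_of_mem hrz, norm_mul, Complex.norm_real, norm_of_nonneg (by positivity),
        Complex.norm_cpow_real]
      gcongr
      refine (norm_add_le _ _).trans (add_le_add_left ?_ _)
      rw [Complex.norm_real, norm_of_nonneg (by positivity)]
      exact (div_le_one hz).2 hrz.2
    · rw [indicator_of_notMem hrz, norm_zero]
      positivity
  · refine (ae_restrict_iff' measurableSet_Ioi).2 (.of_forall fun r (hr : 0 < r) => ?_)
    have hdiv : Tendsto (fun z : ℝ => r / z) atTop (𝓝 0) := tendsto_id.const_div_atTop r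
    have hfac := ((hcont.tendsto 0).comp hdiv).const_mul ((exp (-r) * r ^ μ : ℝ) : ℂ)
    rw [Complex.ofReal_zero, zero_add] at hfac
    refine hfac.congr' ?_
    filter_upwards [eventually_ge_atTop r] with z hz
    have hmem : r ∈ Ioc 0 z := ⟨hr, hz⟩
    rw [indicator_of_mem hmem, Function.comp_apply]

end LaplaceIntegral

section PoissonIntegrand

variable {μ : ℝ}

lemma one_sub_sq_re (w : ℂ) : (1 - w ^ 2).re = 1 - w.re ^ 2 + w.im ^ 2 := by
  simp [pow_two]
  ring

lemma continuousAt_poissonIntegrand (hμ : 0 < μ) (z : ℝ) {w : ℂ} (hw : w.re ∈ Icc (-1) 1) :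
    ContinuousAt (poissonIntegrand μ z) w := by
  have hre : 0 ≤ (1 - w ^ 2).re := by
    rw [one_sub_sq_re]
    nlinarith [hw.1, hw.2, sq_nonneg w.im]
  refine ContinuousAt.mul ?_ (by fun_prop)
  exact ContinuousAt.comp (f := fun w : ℂ => 1 - w ^ 2) (g := fun w : ℂ => w ^ (μ : ℂ))
    (Complex.continuousAt_cpow_const_of_re_pos (Or.inl hre) (by simpa using hμ)) (by fun_prop)

lemma differentiableAt_poissonIntegrand (μ z : ℝ) {w : ℂ} (hw : w.re ∈ Ioo (-1) 1) :
    DifferentiableAt ℂ (poissonIntegrand μ z) w := by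
  have hre : 0 < (1 - w ^ 2).re := by
    rw [one_sub_sq_re]
    nlinarith [hw.1, hw.2, sq_nonneg w.im]
  exact ((by fun_prop : DifferentiableAt ℂ (fun w : ℂ => 1 - w ^ 2) w).cpow_const
    (Or.inl hre)).mul (by fun_prop)

lemma poissonIntegrand_ofReal (μ z : ℝ) {x : ℝ} (hx : x ∈ Icc (-1 : ℝ) 1) :
    poissonIntegrand μ z x = poissonWeight μ x * Complex.exp ((z * x : ℝ) * Complex.I) := by
  rw [poissonIntegrand, poissonWeight, Complex.ofReal_cpow (by nlinarith [hx.1, hx.2])]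
  push_cast
  ring_nf

lemma poissonBessel_eq_re_integral (hμ : 0 < μ) (z : ℝ) :
    poissonBessel μ z = (∫ x in (-1 : ℝ)..1, poissonIntegrand μ z x).re := by
  have hcongr : ∫ x in (-1 : ℝ)..1, poissonIntegrand μ z x =
      ∫ x in (-1 : ℝ)..1, (poissonWeight μ x : ℂ) * Complex.exp ((z * x : ℝ) * Complex.I) := by
    refine intervalIntegral.integral_congr fun x hx => poissonIntegrand_ofReal μ z ?_
    rwa [uIcc_of_le (by norm_num)] at hx
  have hre := intervalIntegral.intervalIntegral_re (𝕜 := ℂ) (μ := volume) (a := (-1 : ℝ)) (b := 1)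
    (f := fun x : ℝ => (poissonWeight μ x : ℂ) * Complex.exp ((z * x : ℝ) * Complex.I))
    ((have := hμ.le; by fun_prop : Continuous _).intervalIntegrable _ _)
  rw [hcongr, ← RCLike.re_to_complex, ← hre, poissonBessel]
  refine intervalIntegral.integral_congr fun x _ => ?_
  simp only [RCLike.re_to_complex, Complex.re_ofReal_mul, Complex.exp_ofReal_mul_I_re]

lemma integral_poissonIntegrand_one_add (μ z : ℝ) :
    ∫ y in (0 : ℝ)..1, poissonIntegrand μ z (1 + y * Complex.I) =
      Complex.exp (Complex.I * z) * laplaceIntegral μ (-(2 * Complex.I)) z := by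
  rw [laplaceIntegral, ← intervalIntegral.integral_const_mul]
  refine intervalIntegral.integral_congr fun y _ => ?_
  have hbase : 1 - (1 + y * Complex.I) ^ 2 = y * (y + -(2 * Complex.I)) := by
    linear_combination -(y : ℂ) ^ 2 * Complex.I_sq
  have hexp : Complex.I * z * (1 + y * Complex.I) = Complex.I * z + (-(z * y) : ℝ) := by
    push_cast
    linear_combination (z * y : ℂ) * Complex.I_sq
  simp only [poissonIntegrand, hbase, hexp, Complex.exp_add, Complex.ofReal_exp]
  ring

lemma integral_poissonIntegrand_neg_one_add (μ z : ℝ) :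
    ∫ y in (0 : ℝ)..1, poissonIntegrand μ z (-1 + y * Complex.I) =
      Complex.exp (-(Complex.I * z)) * laplaceIntegral μ (2 * Complex.I) z := by
  rw [laplaceIntegral, ← intervalIntegral.integral_const_mul]
  refine intervalIntegral.integral_congr fun y _ => ?_
  have hbase : 1 - (-1 + y * Complex.I) ^ 2 = y * (y + 2 * Complex.I) := by
    linear_combination -(y : ℂ) ^ 2 * Complex.I_sq
  have hexp : Complex.I * z * (-1 + y * Complex.I) = -(Complex.I * z) + (-(z * y) : ℝ) := by
    push_cast
    linear_combination (z * y : ℂ) * Complex.I_sq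
  simp only [poissonIntegrand, hbase, hexp, Complex.exp_add, Complex.ofReal_exp]
  ring

-- Cauchy's theorem on the rectangle with corners `-1` and `1 + i`.
lemma integral_poissonIntegrand_ofReal (hμ : 0 < μ) (z : ℝ) :
    ∫ x in (-1 : ℝ)..1, poissonIntegrand μ z x =
      (∫ x in (-1 : ℝ)..1, poissonIntegrand μ z (x + Complex.I))
      + Complex.I * Complex.exp (-(Complex.I * z)) * laplaceIntegral μ (2 * Complex.I) z
      - Complex.I * Complex.exp (Complex.I * z) * laplaceIntegral μ (-(2 * Complex.I)) z := by
  have hrect := Complex.integral_boundary_rect_eq_zero_of_continuousOn_of_differentiableOn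
    (poissonIntegrand μ z) (-1) (1 + Complex.I)
    (fun w hw => (continuousAt_poissonIntegrand hμ z
      (by simpa using (Complex.mem_reProdIm.1 hw).1)).continuousWithinAt)
    (fun w hw => (differentiableAt_poissonIntegrand μ z
      (by simpa using (Complex.mem_reProdIm.1 hw).1)).differentiableWithinAt)
  simp only [Complex.neg_re, Complex.one_re, Complex.neg_im, Complex.one_im, Complex.add_re,
    Complex.add_im, Complex.I_re, Complex.I_im, neg_zero, add_zero, zero_add, Complex.ofReal_zero,
    zero_mul, Complex.ofReal_one, one_mul, Complex.ofReal_neg, smul_eq_mul,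
    integral_poissonIntegrand_one_add, integral_poissonIntegrand_neg_one_add] at hrect
  linear_combination hrect

lemma norm_integral_poissonIntegrand_add_I_le (hμ : 0 ≤ μ) (z : ℝ) :
    ‖∫ x in (-1 : ℝ)..1, poissonIntegrand μ z (x + Complex.I)‖ ≤ exp (-1 * z) * (5 ^ μ * 2) := by
  have hpt (x : ℝ) (hx : x ∈ uIoc (-1 : ℝ) 1) :
      ‖poissonIntegrand μ z (x + Complex.I)‖ ≤ 5 ^ μ * exp (-1 * z) := by
    rw [uIoc_of_le (by norm_num)] at hx
    have hx2 : ‖(x : ℂ) + Complex.I‖ ≤ 2 := by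
      refine (norm_add_le _ _).trans ?_
      rw [Complex.norm_real, Complex.norm_I, norm_eq_abs]
      linarith [abs_le.2 ⟨hx.1.le, hx.2⟩]
    have hre : (Complex.I * z * ((x : ℂ) + Complex.I)).re = -1 * z := by simp
    rw [poissonIntegrand, norm_mul, Complex.norm_cpow_real, Complex.norm_exp, hre]
    gcongr
    refine (norm_sub_le _ _).trans ?_
    rw [norm_pow, norm_one]
    nlinarith [norm_nonneg ((x : ℂ) + Complex.I)]
  refine (intervalIntegral.norm_integral_le_of_norm_le_const hpt).trans_eq ?_
  norm_num
  ring

lemma tendsto_rpow_mul_integral_poissonIntegrand_add_I (hμ : 0 ≤ μ) :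
    Tendsto (fun z : ℝ => ((z ^ (μ + 1) : ℝ) : ℂ) *
      ∫ x in (-1 : ℝ)..1, poissonIntegrand μ z (x + Complex.I)) atTop (𝓝 0) := by
  have hexp := (tendsto_rpow_mul_exp_neg_mul_atTop_nhds_zero (μ + 1) 1 one_pos).mul_const
    ((5 : ℝ) ^ μ * 2)
  rw [zero_mul] at hexp
  refine squeeze_zero_norm' ?_ hexp
  filter_upwards [eventually_gt_atTop 0] with z hz
  rw [norm_mul, Complex.norm_real, norm_of_nonneg (by positivity), mul_assoc]
  gcongr
  exact norm_integral_poissonIntegrand_add_I_le hμ z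

lemma two_mul_I_cpow (μ : ℝ) : (2 * Complex.I) ^ (μ : ℂ) =
    ((2 ^ μ : ℝ) : ℂ) * Complex.exp ((π / 2 * μ : ℝ) * Complex.I) := by
  rw [← Complex.ofReal_ofNat, ofReal_mul_cpow two_pos Complex.I_ne_zero,
    Complex.cpow_def_of_ne_zero Complex.I_ne_zero, Complex.log_I]
  push_cast
  ring_nf

lemma neg_two_mul_I_cpow (μ : ℝ) : (-(2 * Complex.I)) ^ (μ : ℂ) =
    ((2 ^ μ : ℝ) : ℂ) * Complex.exp (-(π / 2 * μ : ℝ) * Complex.I) := by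
  rw [← mul_neg, ← Complex.ofReal_ofNat, ofReal_mul_cpow two_pos (neg_ne_zero.2 Complex.I_ne_zero),
    Complex.cpow_def_of_ne_zero (neg_ne_zero.2 Complex.I_ne_zero), Complex.log_neg_I]
  push_cast
  ring_nf

-- Each vertical side contributes `Γ (μ + 1) 2 ^ μ` times one exponential of the limiting cosine.
lemma vertical_sides_main_term_re (μ z : ℝ) :
    (Complex.I * Complex.exp (-(Complex.I * z)) * (Gamma (μ + 1) * (2 * Complex.I) ^ (μ : ℂ)) -
      Complex.I * Complex.exp (Complex.I * z) *
        (Gamma (μ + 1) * (-(2 * Complex.I)) ^ (μ : ℂ))).re =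
      2 ^ (μ + 1) * Gamma (μ + 1) * cos (z - (μ + 1) * π / 2) := by
  have hI : Complex.exp (π / 2 * Complex.I) = Complex.I := Complex.exp_pi_div_two_mul_I
  set φ : ℝ := z - (μ + 1) * π / 2 with hφ
  have hplus : Complex.I * Complex.exp (-(Complex.I * z)) *
      Complex.exp ((π / 2 * μ : ℝ) * Complex.I) = Complex.exp ((-φ : ℝ) * Complex.I) := by
    nth_rewrite 1 [← hI]
    rw [← Complex.exp_add, ← Complex.exp_add, hφ]
    push_cast
    ring_nf
  have hminus : -Complex.I * Complex.exp (Complex.I * z) *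
      Complex.exp (-(π / 2 * μ : ℝ) * Complex.I) = Complex.exp (φ * Complex.I) := by
    rw [← Complex.exp_neg_pi_div_two_mul_I, ← Complex.exp_add, ← Complex.exp_add, hφ]
    push_cast
    ring_nf
  have hsum : Complex.I * Complex.exp (-(Complex.I * z)) *
      (Gamma (μ + 1) * (2 * Complex.I) ^ (μ : ℂ)) -
      Complex.I * Complex.exp (Complex.I * z) * (Gamma (μ + 1) * (-(2 * Complex.I)) ^ (μ : ℂ)) =
      (Gamma (μ + 1) * 2 ^ μ : ℝ) *
        (Complex.exp ((-φ : ℝ) * Complex.I) + Complex.exp (φ * Complex.I)) := by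
    rw [← hplus, ← hminus, two_mul_I_cpow, neg_two_mul_I_cpow]
    push_cast
    ring
  rw [hsum, Complex.re_ofReal_mul, Complex.add_re, Complex.exp_ofReal_mul_I_re,
    Complex.exp_ofReal_mul_I_re, cos_neg, rpow_add_one two_ne_zero]
  ring

lemma tendsto_rpow_mul_poissonBessel_sub (hμ : 0 < μ) :
    Tendsto (fun z : ℝ => z ^ (μ + 1) * poissonBessel μ z -
      2 ^ (μ + 1) * Gamma (μ + 1) * cos (z - (μ + 1) * π / 2)) atTop (𝓝 0) := by
  have htop := tendsto_rpow_mul_integral_poissonIntegrand_add_I hμ.le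
  have hleft := tendsto_rpow_mul_laplaceIntegral hμ (σ := 2 * Complex.I) (by simp)
  have hright := tendsto_rpow_mul_laplaceIntegral hμ (σ := -(2 * Complex.I)) (by simp)
  rw [tendsto_iff_norm_sub_tendsto_zero] at htop hleft hright
  have hsum := (htop.add hleft).add hright
  rw [add_zero, add_zero] at hsum
  refine squeeze_zero_norm (fun z => ?_) hsum
  have hsplit : z ^ (μ + 1) * poissonBessel μ z -
      2 ^ (μ + 1) * Gamma (μ + 1) * cos (z - (μ + 1) * π / 2) =
      ((z ^ (μ + 1) : ℝ) * (∫ x in (-1 : ℝ)..1, poissonIntegrand μ z (x + Complex.I)) - 0 +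
        Complex.I * Complex.exp (-(Complex.I * z)) * ((z ^ (μ + 1) : ℝ) *
          laplaceIntegral μ (2 * Complex.I) z - Gamma (μ + 1) * (2 * Complex.I) ^ (μ : ℂ)) -
        Complex.I * Complex.exp (Complex.I * z) * ((z ^ (μ + 1) : ℝ) *
          laplaceIntegral μ (-(2 * Complex.I)) z -
            Gamma (μ + 1) * (-(2 * Complex.I)) ^ (μ : ℂ))).re := by
    rw [← vertical_sides_main_term_re, poissonBessel_eq_re_integral hμ,
      integral_poissonIntegrand_ofReal hμ, ← Complex.re_ofReal_mul, ← Complex.sub_re]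
    congr 1
    ring
  have hnorm (c w : ℂ) (hc : c.re = 0) : ‖Complex.I * Complex.exp c * w‖ = ‖w‖ := by
    rw [norm_mul, norm_mul, Complex.norm_I, Complex.norm_exp, hc, exp_zero, one_mul, one_mul]
  rw [hsplit, norm_eq_abs]
  refine (Complex.abs_re_le_norm _).trans <| (norm_sub_le _ _).trans <|
    add_le_add ((norm_add_le _ _).trans (add_le_add_right (hnorm _ _ ?_).le _)) (hnorm _ _ ?_).le
  all_goals simp

end PoissonIntegrand

/-! ### The Bessel equation in Liouville normal form -/

section LiouvilleTransform

variable {A x : ℝ} {y y' : ℝ → ℝ}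

lemma hasDerivAt_rpow_mul (hx : 0 < x) (hy : HasDerivAt y (y' x) x) :
    HasDerivAt (fun x => x ^ A * y x) (x ^ A * (y' x + A / x * y x)) x := by
  refine ((hasDerivAt_rpow_const (Or.inl hx.ne')).mul hy).congr_deriv ?_
  rw [rpow_sub_one hx.ne']
  ring

lemma hasDerivAt_rpow_mul_add_div_mul {q : ℝ} (hx : 0 < x) (hy : HasDerivAt y (y' x) x)
    (hy' : HasDerivAt y' (-(2 * A / x) * y' x - q * y x) x) :
    HasDerivAt (fun x => x ^ A * (y' x + A / x * y x))
      ((A * (A - 1) / x ^ 2 - q) * (x ^ A * y x)) x := by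
  have hdiv : HasDerivAt (fun x => A / x) (-A / x ^ 2) x := by
    simpa [div_eq_mul_inv] using (hasDerivAt_inv hx.ne').const_mul A
  refine ((hasDerivAt_rpow_const (Or.inl hx.ne')).fun_mul
    (hy'.fun_add (hdiv.fun_mul hy))).congr_deriv ?_
  rw [rpow_sub_one hx.ne']
  field_simp
  ring

end LiouvilleTransform

/-- The Bessel function `Γ(a + 1) (2 / z)^a J_a(z)`, normalised to take the value `1` at `0`. -/
noncomputable def normBessel (a z : ℝ) : ℝ :=
  poissonBessel (a - 1 / 2) z / poissonBessel (a - 1 / 2) 0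

/-- The derivative of `normBessel a`. -/
noncomputable def normBesselDeriv (a z : ℝ) : ℝ :=
  poissonBesselDeriv (a - 1 / 2) z / poissonBessel (a - 1 / 2) 0

/-- The solution `2^a Γ(a + 1) √z J_a(z)` of the Liouville normal form
`F'' + (1 - (a² - 1/4) / z²) F = 0` of Bessel's equation. -/
noncomputable def liouvilleBessel (a z : ℝ) : ℝ := z ^ (a + 1 / 2) * normBessel a z

/-- The derivative of `liouvilleBessel a`. -/
noncomputable def liouvilleBesselDeriv (a z : ℝ) : ℝ :=
  z ^ (a + 1 / 2) * (normBesselDeriv a z + (a + 1 / 2) / z * normBessel a z)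

/-- The limiting amplitude of the oscillations of `liouvilleBessel a`. -/
noncomputable def besselAmplitude (a : ℝ) : ℝ := 2 ^ (a + 1 / 2) * Gamma (a + 1) / √π

section LiouvilleBessel

variable {a z : ℝ}

lemma normBessel_zero (ha : 1 / 2 ≤ a) : normBessel a 0 = 1 :=
  div_self (poissonBessel_zero_pos (by linarith)).ne'

lemma normBesselDeriv_zero (a : ℝ) : normBesselDeriv a 0 = 0 := by
  rw [normBesselDeriv, poissonBesselDeriv_zero, zero_div]

lemma normBesselDeriv_eq (ha : 1 / 2 ≤ a) (z : ℝ) :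
    normBesselDeriv a z = -(z * poissonBessel (a + 1 / 2) z) /
      (2 * (a + 1 / 2) * poissonBessel (a - 1 / 2) 0) := by
  have hmul := poissonBesselDeriv_mul (μ := a - 1 / 2) (by linarith) z
  rw [show a - 1 / 2 + 1 = a + 1 / 2 by ring] at hmul
  rw [← hmul, normBesselDeriv]
  have : a + 1 / 2 ≠ 0 := by linarith
  field_simp

lemma continuous_normBesselDeriv (ha : 1 / 2 ≤ a) : Continuous (normBesselDeriv a) := by
  have hcont : Continuous (poissonBessel (a + 1 / 2)) := continuous_iff_continuousAt.2 fun z =>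
    (hasDerivAt_poissonBessel (by linarith) z).continuousAt
  rw [funext (normBesselDeriv_eq ha)]
  exact (continuous_id.mul hcont).neg.div_const _

lemma abs_normBessel_le_one (ha : 1 / 2 ≤ a) (z : ℝ) : |normBessel a z| ≤ 1 := by
  have hpos := poissonBessel_zero_pos (μ := a - 1 / 2) (by linarith)
  rw [normBessel, abs_div, abs_of_pos hpos, div_le_one hpos]
  exact abs_poissonBessel_le (by linarith) z

lemma hasDerivAt_normBessel (ha : 1 / 2 ≤ a) (z : ℝ) :
    HasDerivAt (normBessel a) (normBesselDeriv a z) z :=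
  (hasDerivAt_poissonBessel (by linarith) z).div_const _

lemma hasDerivAt_normBesselDeriv (ha : 1 / 2 ≤ a) (hz : z ≠ 0) :
    HasDerivAt (normBesselDeriv a)
      (-(2 * (a + 1 / 2) / z) * normBesselDeriv a z - 1 * normBessel a z) z := by
  refine ((hasDerivAt_poissonBesselDeriv (μ := a - 1 / 2) (by linarith) hz).div_const
    (poissonBessel (a - 1 / 2) 0)).congr_deriv ?_
  rw [normBesselDeriv, normBessel]
  ring

lemma hasDerivAt_liouvilleBessel (ha : 1 / 2 ≤ a) (hz : 0 < z) :
    HasDerivAt (liouvilleBessel a) (liouvilleBesselDeriv a z) z :=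
  hasDerivAt_rpow_mul hz (hasDerivAt_normBessel ha z)

lemma hasDerivAt_liouvilleBesselDeriv (ha : 1 / 2 ≤ a) (hz : 0 < z) :
    HasDerivAt (liouvilleBesselDeriv a)
      (-(1 - (a ^ 2 - 1 / 4) / z ^ 2) * liouvilleBessel a z) z := by
  refine (hasDerivAt_rpow_mul_add_div_mul hz (hasDerivAt_normBessel ha z)
    (hasDerivAt_normBesselDeriv ha hz.ne')).congr_deriv ?_
  rw [liouvilleBessel]
  ring

lemma besselAmplitude_pos (ha : -1 < a) : 0 < besselAmplitude a := by
  have := Gamma_pos_of_pos (show 0 < a + 1 by linarith)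
  unfold besselAmplitude
  positivity

lemma besselAmplitude_eq (ha : 1 / 2 ≤ a) :
    besselAmplitude a = 2 ^ (a + 1 / 2) * Gamma (a + 1 / 2) / poissonBessel (a - 1 / 2) 0 := by
  have hzero := poissonBessel_zero_mul_Gamma (μ := a - 1 / 2) (by linarith)
  rw [show a - 1 / 2 + 3 / 2 = a + 1 by ring, show a - 1 / 2 + 1 = a + 1 / 2 by ring] at hzero
  rw [besselAmplitude, div_eq_div_iff (by positivity) (poissonBessel_zero_pos (by linarith)).ne']
  linear_combination 2 ^ (a + 1 / 2) * hzero

lemma tendsto_liouvilleBessel_sub (ha : 1 / 2 < a) :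
    Tendsto (fun z => liouvilleBessel a z - besselAmplitude a * cos (z - (a + 1 / 2) * π / 2))
      atTop (𝓝 0) := by
  have h := (tendsto_rpow_mul_poissonBessel_sub (μ := a - 1 / 2) (by linarith)).div_const
    (poissonBessel (a - 1 / 2) 0)
  rw [zero_div] at h
  refine h.congr fun z => ?_
  rw [besselAmplitude_eq ha.le, liouvilleBessel, normBessel,
    show a - 1 / 2 + 1 = a + 1 / 2 by ring]
  ring

lemma tendsto_rpow_mul_normBesselDeriv_add (ha : 1 / 2 < a) :
    Tendsto (fun z => z ^ (a + 1 / 2) * normBesselDeriv a z +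
      besselAmplitude a * sin (z - (a + 1 / 2) * π / 2)) atTop (𝓝 0) := by
  have h := (tendsto_rpow_mul_poissonBessel_sub (μ := a + 1 / 2) (by linarith)).const_mul
    (-(1 / (2 * (a + 1 / 2) * poissonBessel (a - 1 / 2) 0)))
  rw [mul_zero] at h
  refine h.congr' ?_
  filter_upwards [eventually_gt_atTop 0] with z hz
  have hphase : cos (z - (a + 1 / 2 + 1) * π / 2) = sin (z - (a + 1 / 2) * π / 2) := by
    rw [← cos_sub_pi_div_two]
    ring_nf
  rw [normBesselDeriv_eq ha.le, besselAmplitude_eq ha.le, hphase, rpow_add_one hz.ne',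
    rpow_add_one two_ne_zero, Gamma_add_one (by linarith)]
  have := (poissonBessel_zero_pos (μ := a - 1 / 2) (by linarith)).ne'
  have : a + 1 / 2 ≠ 0 := by linarith
  field_simp
  ring

lemma tendsto_liouvilleBesselDeriv_add (ha : 1 / 2 < a) :
    Tendsto (fun z => liouvilleBesselDeriv a z + besselAmplitude a *
      sin (z - (a + 1 / 2) * π / 2)) atTop (𝓝 0) := by
  have hcos : Tendsto (fun z => (a + 1 / 2) / z * (besselAmplitude a *
      cos (z - (a + 1 / 2) * π / 2))) atTop (𝓝 0) := by
    refine (tendsto_id.const_div_atTop (a + 1 / 2)).zero_mul_isBoundedUnder_le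
      (isBoundedUnder_of ⟨|besselAmplitude a|, fun z => ?_⟩)
    rw [Function.comp_apply, norm_mul]
    exact mul_le_of_le_one_right (abs_nonneg _) (abs_cos_le_one _)
  have hrest := ((tendsto_id.const_div_atTop (a + 1 / 2)).mul (tendsto_liouvilleBessel_sub ha))
  have hsum := ((tendsto_rpow_mul_normBesselDeriv_add ha).add hcos).add hrest
  simp only [zero_mul, add_zero] at hsum
  refine hsum.congr fun z => ?_
  rw [liouvilleBesselDeriv, liouvilleBessel, id]
  ring

end LiouvilleBessel

section Oscillator

lemma norm_le_div_pow_of_tendsto_zero {E : Type*} [NormedAddCommGroup E] [NormedSpace ℝ E]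
    {g g' : ℝ → E} {C : ℝ} {k : ℕ} (hg : ∀ z, 1 ≤ z → HasDerivAt g (g' z) z)
    (hlim : Tendsto g atTop (𝓝 0)) (hbound : ∀ z, 1 ≤ z → ‖g' z‖ ≤ k * C / z ^ (k + 1))
    (hC : 0 ≤ C) {z : ℝ} (hz : 1 ≤ z) : ‖g z‖ ≤ C / z ^ k := by
  have hdiff (y : ℝ) (hy : z ≤ y) : ‖g y - g z‖ ≤ C / z ^ k - C / y ^ k := by
    refine image_norm_le_of_norm_deriv_right_le_deriv_boundary'
      (f := fun x => g x - g z) (f' := g') (B := fun x => C / z ^ k - C / x ^ k)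
      (B' := fun x => k * C / x ^ (k + 1)) (a := z) (b := y) (fun x hx => ?_)
      (fun x hx => ((hg x (hz.trans hx.1)).sub_const _).hasDerivWithinAt) (by simp)
      (fun x hx => ?_) (fun x hx => ?_) (fun x hx => hbound x (hz.trans hx.1)) ⟨hy, le_rfl⟩
    · exact ((hg x (hz.trans hx.1)).sub_const _).continuousAt.continuousWithinAt
    · have : x ^ k ≠ 0 := pow_ne_zero _ (by linarith [hx.1])
      fun_prop (disch := assumption)
    · have hx0 : x ≠ 0 := by linarith [hx.1]
      refine (((hasDerivAt_pow k x).fun_inv (pow_ne_zero _ hx0)).const_mul C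
        |>.const_sub (C / z ^ k)).hasDerivWithinAt.congr_deriv ?_
      rcases k with - | k
      · simp
      · rw [Nat.add_sub_cancel]
        field_simp
        ring
  have hlim' : Tendsto (fun y => ‖g y - g z‖) atTop (𝓝 ‖g z‖) := by
    simpa using (hlim.sub_const (g z)).norm
  refine le_of_tendsto hlim' ((eventually_ge_atTop z).mono fun y hy => (hdiff y hy).trans ?_)
  have : 0 ≤ C / y ^ k := by have := hz.trans hy; positivity
  linarith

lemma exists_forall_norm_le_of_tendsto_zero {E : Type*} [NormedAddCommGroup E] {f : ℝ → E} {a : ℝ}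
    (hf : ContinuousOn f (Ici a)) (hlim : Tendsto f atTop (𝓝 0)) :
    ∃ C, 0 ≤ C ∧ ∀ z, a ≤ z → ‖f z‖ ≤ C := by
  obtain ⟨Z, hZ⟩ := eventually_atTop.1 (hlim.norm.eventually_le_const (by simp : ‖(0 : E)‖ < 1))
  obtain ⟨C, hC⟩ := isCompact_Icc.exists_bound_of_continuousOn
    (hf.mono (Icc_subset_Ici_self : Icc a Z ⊆ Ici a))
  refine ⟨max C 1, by positivity, fun z hz => ?_⟩
  rcases le_total z Z with h | h
  · exact (hC z ⟨hz, h⟩).trans (le_max_left _ _)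
  · exact (hZ z h).trans (le_max_right _ _)

variable {e e' e'' : ℝ → ℝ}

-- `(e' + i e) exp (-i z)` has derivative `(e'' + e) exp (-i z)`.
lemma abs_le_div_pow_of_abs_deriv_deriv_add_le {C : ℝ} {k : ℕ}
    (he : ∀ z, 1 ≤ z → HasDerivAt e (e' z) z) (he' : ∀ z, 1 ≤ z → HasDerivAt e' (e'' z) z)
    (hlim : Tendsto e atTop (𝓝 0)) (hlim' : Tendsto e' atTop (𝓝 0)) (hC : 0 ≤ C)
    (hbound : ∀ z, 1 ≤ z → |e'' z + e z| ≤ k * C / z ^ (k + 1)) {z : ℝ} (hz : 1 ≤ z) :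
    |e z| ≤ C / z ^ k ∧ |e' z| ≤ C / z ^ k := by
  let W : ℝ → ℂ := fun z => (e' z + e z * Complex.I) * Complex.exp (-(z * Complex.I))
  have hexp (w : ℂ) (z : ℝ) : ‖w * Complex.exp (-(z * Complex.I))‖ = ‖w‖ := by
    rw [norm_mul, Complex.norm_exp]
    simp
  have hW (z : ℝ) (hz : 1 ≤ z) :
      HasDerivAt W ((e'' z + e z : ℝ) * Complex.exp (-(z * Complex.I))) z := by
    have hphase : HasDerivAt (fun z : ℝ => Complex.exp (-(z * Complex.I)))
        (Complex.exp (-(z * Complex.I)) * -(1 * Complex.I)) z :=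
      ((hasDerivAt_id z).ofReal_comp.mul_const Complex.I).neg.cexp
    refine (((he' z hz).ofReal_comp.fun_add ((he z hz).ofReal_comp.mul_const Complex.I)).fun_mul
      hphase).congr_deriv ?_
    push_cast
    linear_combination (-(e z) * Complex.exp (-(z * Complex.I))) * Complex.I_sq
  have hWlim : Tendsto W atTop (𝓝 0) := by
    rw [tendsto_zero_iff_norm_tendsto_zero]
    simp only [W, hexp]
    have hsum := ((Complex.continuous_ofReal.tendsto 0).comp hlim').add
      (((Complex.continuous_ofReal.tendsto 0).comp hlim).mul_const Complex.I)
    simpa using hsum.norm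
  have hnorm := norm_le_div_pow_of_tendsto_zero hW hWlim (fun z hz => by
    simpa only [hexp, Complex.norm_real, norm_eq_abs] using hbound z hz) hC hz
  rw [hexp] at hnorm
  constructor
  · refine le_trans ?_ hnorm
    simpa using Complex.abs_im_le_norm (e' z + e z * Complex.I)
  · refine le_trans ?_ hnorm
    simpa using Complex.abs_re_le_norm (e' z + e z * Complex.I)

lemma exists_abs_le_div_sq_of_abs_deriv_deriv_add_le {M R : ℝ} (hM : 0 ≤ M) (hR : 0 ≤ R)
    (he : ∀ z, 1 ≤ z → HasDerivAt e (e' z) z) (he' : ∀ z, 1 ≤ z → HasDerivAt e' (e'' z) z)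
    (hlim : Tendsto e atTop (𝓝 0)) (hlim' : Tendsto e' atTop (𝓝 0))
    (hode : ∀ z, 1 ≤ z → |e'' z + e z| ≤ M * |e z| / z ^ 2 + R / z ^ 3) :
    ∃ C, 0 ≤ C ∧ ∀ z, 1 ≤ z → |e z| ≤ C / z ^ 2 ∧ |e' z| ≤ C / z ^ 2 := by
  obtain ⟨C₀, hC₀, hbound₀⟩ := exists_forall_norm_le_of_tendsto_zero
    (fun z hz => (he z hz).continuousAt.continuousWithinAt) hlim
  have hbound₁ (z : ℝ) (hz : 1 ≤ z) : |e z| ≤ (M * C₀ + R) / z ^ 1 := by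
    refine (abs_le_div_pow_of_abs_deriv_deriv_add_le he he' hlim hlim' (by positivity)
      (fun x hx => (hode x hx).trans ?_) hz).1
    have hx3 : R / x ^ 3 ≤ R / x ^ 2 := by gcongr; norm_num
    have hxe : M * |e x| / x ^ 2 ≤ M * C₀ / x ^ 2 := by gcongr; exact hbound₀ x hx
    refine (add_le_add hxe hx3).trans_eq ?_
    push_cast
    ring
  refine ⟨(M * (M * C₀ + R) + R) / 2, by positivity, fun z hz =>
    abs_le_div_pow_of_abs_deriv_deriv_add_le he he' hlim hlim' (by positivity)
      (fun x hx => (hode x hx).trans ?_) hz⟩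
  have hxe : M * |e x| / x ^ 2 ≤ M * ((M * C₀ + R) / x ^ 1) / x ^ 2 := by
    gcongr
    exact hbound₁ x hx
  refine (add_le_add hxe le_rfl).trans_eq ?_
  have : x ≠ 0 := by linarith
  push_cast
  field_simp

end Oscillator

/-- Two terms of the phase-amplitude expansion at infinity of a solution of
`F'' + (1 - m / z²) F = 0`. -/
noncomputable def twoTermWave (m φ z : ℝ) : ℝ := cos (z - φ) - m / (2 * z) * sin (z - φ)

/-- The derivative of `twoTermWave m φ`. -/
noncomputable def twoTermWaveDeriv (m φ z : ℝ) : ℝ :=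
  -sin (z - φ) - m / (2 * z) * cos (z - φ) + m / (2 * z ^ 2) * sin (z - φ)

section TwoTermWave

variable {m φ z : ℝ}

lemma hasDerivAt_twoTermWave (hz : z ≠ 0) :
    HasDerivAt (twoTermWave m φ) (twoTermWaveDeriv m φ z) z := by
  have hinv : HasDerivAt (fun z => m / (2 * z)) (-(m / (2 * z ^ 2))) z := by
    refine (((hasDerivAt_id z).const_mul 2).fun_inv (by simpa using hz)
      |>.const_mul m).congr_deriv ?_
    simp only [id]
    field_simp
  refine (((hasDerivAt_id z).sub_const φ).cos.fun_sub
    (hinv.fun_mul ((hasDerivAt_id z).sub_const φ).sin)).congr_deriv ?_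
  rw [twoTermWaveDeriv, id]
  ring

lemma hasDerivAt_twoTermWaveDeriv (hz : z ≠ 0) :
    HasDerivAt (twoTermWaveDeriv m φ)
      (-(1 - m / z ^ 2) * twoTermWave m φ z + (m ^ 2 / 2 - m) / z ^ 3 * sin (z - φ)) z := by
  have hinv (k : ℕ) (hk : k ≠ 0) :
      HasDerivAt (fun z => m / (2 * z ^ k)) (-(k * m / (2 * z ^ (k + 1)))) z := by
    refine (((hasDerivAt_pow k z).const_mul 2).fun_inv (by simp [hz])
      |>.const_mul m).congr_deriv ?_
    obtain ⟨k, rfl⟩ := Nat.exists_eq_succ_of_ne_zero hk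
    rw [Nat.succ_eq_add_one, Nat.add_sub_cancel]
    field_simp
    ring
  have hinv₁ := hinv 1 one_ne_zero
  simp only [pow_one] at hinv₁
  have hphase := (hasDerivAt_id z).sub_const φ
  refine ((hphase.sin.fun_neg.fun_sub (hinv₁.fun_mul hphase.cos)).fun_add
    ((hinv 2 two_ne_zero).fun_mul hphase.sin)).congr_deriv ?_
  rw [twoTermWave, id]
  push_cast
  field_simp
  ring

lemma tendsto_twoTermWave_sub_cos (m φ : ℝ) :
    Tendsto (fun z => twoTermWave m φ z - cos (z - φ)) atTop (𝓝 0) := by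
  have hinv : Tendsto (fun z : ℝ => m / (2 * z)) atTop (𝓝 0) :=
    (tendsto_id.const_mul_atTop two_pos).const_div_atTop m
  have h := (hinv.zero_mul_isBoundedUnder_le (g := fun z => sin (z - φ))
    (isBoundedUnder_of ⟨1, fun z => abs_sin_le_one _⟩)).neg
  rw [neg_zero] at h
  refine h.congr fun z => ?_
  rw [twoTermWave]
  ring

lemma tendsto_twoTermWaveDeriv_add_sin (m φ : ℝ) :
    Tendsto (fun z => twoTermWaveDeriv m φ z + sin (z - φ)) atTop (𝓝 0) := by
  have hinv : Tendsto (fun z : ℝ => m / (2 * z)) atTop (𝓝 0) :=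
    (tendsto_id.const_mul_atTop two_pos).const_div_atTop m
  have hinv_sq : Tendsto (fun z : ℝ => m / (2 * z ^ 2)) atTop (𝓝 0) :=
    ((tendsto_pow_atTop two_ne_zero).const_mul_atTop two_pos).const_div_atTop m
  have hcos := hinv.zero_mul_isBoundedUnder_le (g := fun z => cos (z - φ))
    (isBoundedUnder_of ⟨1, fun z => abs_cos_le_one _⟩)
  have hsin := hinv_sq.zero_mul_isBoundedUnder_le (g := fun z => sin (z - φ))
    (isBoundedUnder_of ⟨1, fun z => abs_sin_le_one _⟩)
  have h := hsin.sub hcos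
  rw [sub_zero] at h
  refine h.congr fun z => ?_
  rw [twoTermWaveDeriv]
  ring

lemma abs_twoTermWave_le (m φ : ℝ) (hz : 1 ≤ z) : |twoTermWave m φ z| ≤ 1 + |m| := by
  refine (abs_sub _ _).trans (add_le_add (abs_cos_le_one _) ?_)
  rw [abs_mul, abs_div, abs_of_pos (by linarith : 0 < 2 * z)]
  refine (mul_le_of_le_one_right (by positivity) (abs_sin_le_one _)).trans ?_
  exact div_le_self (abs_nonneg m) (by linarith)

lemma abs_twoTermWaveDeriv_add_sin_le (m φ : ℝ) (hz : 1 ≤ z) :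
    |twoTermWaveDeriv m φ z + sin (z - φ)| ≤ |m| / z := by
  have heq : twoTermWaveDeriv m φ z + sin (z - φ) =
      m / (2 * z ^ 2) * sin (z - φ) - m / (2 * z) * cos (z - φ) := by
    rw [twoTermWaveDeriv]
    ring
  have hsin : |m / (2 * z ^ 2) * sin (z - φ)| ≤ |m| / (2 * z) := by
    rw [abs_mul, abs_div, abs_of_pos (by nlinarith : 0 < 2 * z ^ 2)]
    refine (mul_le_of_le_one_right (by positivity) (abs_sin_le_one _)).trans ?_
    gcongr
    exact le_self_pow₀ hz two_ne_zero
  have hcos : |m / (2 * z) * cos (z - φ)| ≤ |m| / (2 * z) := by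
    rw [abs_mul, abs_div, abs_of_pos (by linarith : 0 < 2 * z)]
    exact mul_le_of_le_one_right (by positivity) (abs_cos_le_one _)
  calc _ ≤ |m| / (2 * z) + |m| / (2 * z) := heq ▸ (abs_sub _ _).trans (add_le_add hsin hcos)
    _ = |m| / z := by field_simp; norm_num

end TwoTermWave

section LiouvilleBesselAsymptotics

variable {a : ℝ}

theorem exists_abs_liouvilleBessel_sub_twoTermWave_le (ha : 1 / 2 < a) :
    ∃ C, 0 ≤ C ∧ ∀ z, 1 ≤ z →
      |liouvilleBessel a z - besselAmplitude a *
          twoTermWave (a ^ 2 - 1 / 4) ((a + 1 / 2) * π / 2) z| ≤ C / z ^ 2 ∧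
      |liouvilleBesselDeriv a z - besselAmplitude a *
          twoTermWaveDeriv (a ^ 2 - 1 / 4) ((a + 1 / 2) * π / 2) z| ≤ C / z ^ 2 := by
  set K := besselAmplitude a
  set m := a ^ 2 - 1 / 4
  set φ := (a + 1 / 2) * π / 2
  have hm : 0 ≤ m := by simp only [m]; nlinarith
  have he (z : ℝ) (hz : 1 ≤ z) := (hasDerivAt_liouvilleBessel ha.le (by linarith : 0 < z)).fun_sub
    ((hasDerivAt_twoTermWave (m := m) (φ := φ) (by linarith : z ≠ 0)).const_mul K)
  have he' (z : ℝ) (hz : 1 ≤ z) :=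
    (hasDerivAt_liouvilleBesselDeriv ha.le (by linarith : 0 < z)).fun_sub
      ((hasDerivAt_twoTermWaveDeriv (m := m) (φ := φ) (by linarith : z ≠ 0)).const_mul K)
  have hlim : Tendsto (fun z => liouvilleBessel a z - K * twoTermWave m φ z) atTop (𝓝 0) := by
    have h := (tendsto_liouvilleBessel_sub ha).sub ((tendsto_twoTermWave_sub_cos m φ).const_mul K)
    rw [mul_zero, sub_zero] at h
    exact h.congr fun z => by ring
  have hlim' :
      Tendsto (fun z => liouvilleBesselDeriv a z - K * twoTermWaveDeriv m φ z) atTop (𝓝 0) := by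
    have h := (tendsto_liouvilleBesselDeriv_add ha).sub
      ((tendsto_twoTermWaveDeriv_add_sin m φ).const_mul K)
    rw [mul_zero, sub_zero] at h
    exact h.congr fun z => by ring
  refine exists_abs_le_div_sq_of_abs_deriv_deriv_add_le hm (by positivity :
    0 ≤ |K * (m ^ 2 / 2 - m)|) he he' hlim hlim' fun z hz => ?_
  have hz0 : 0 < z := by linarith
  have heq : -(1 - m / z ^ 2) * liouvilleBessel a z -
      K * (-(1 - m / z ^ 2) * twoTermWave m φ z + (m ^ 2 / 2 - m) / z ^ 3 * sin (z - φ)) +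
      (liouvilleBessel a z - K * twoTermWave m φ z) =
      m * (liouvilleBessel a z - K * twoTermWave m φ z) / z ^ 2 -
        K * (m ^ 2 / 2 - m) / z ^ 3 * sin (z - φ) := by ring
  rw [heq]
  refine (abs_sub _ _).trans (add_le_add (le_of_eq ?_) ?_)
  · rw [abs_div, abs_mul, abs_of_nonneg hm, abs_of_pos (pow_pos hz0 2)]
  · rw [abs_mul, abs_div, abs_of_pos (pow_pos hz0 3)]
    exact mul_le_of_le_one_right (by positivity) (abs_sin_le_one _)

theorem exists_abs_liouvilleBessel_le (ha : 1 / 2 < a) :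
    ∃ C, 0 ≤ C ∧ ∀ z, 1 ≤ z → |liouvilleBessel a z| ≤ C ∧ |liouvilleBesselDeriv a z| ≤ C ∧
      |liouvilleBesselDeriv a z +
        besselAmplitude a * sin (z - (a + 1 / 2) * π / 2)| ≤ C / z := by
  obtain ⟨C, hC, hbound⟩ := exists_abs_liouvilleBessel_sub_twoTermWave_le ha
  have hK := besselAmplitude_pos (a := a) (by linarith)
  set K := besselAmplitude a
  set m := a ^ 2 - 1 / 4
  set φ := (a + 1 / 2) * π / 2
  refine ⟨C + K * (1 + |m|), by positivity, fun z hz => ?_⟩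
  have hsq : C / z ^ 2 ≤ C / z := by
    gcongr
    exact le_self_pow₀ hz two_ne_zero
  have hinv : C / z ≤ C := div_le_self hC hz
  obtain ⟨hF, hF'⟩ := hbound z hz
  have hwave : |K * twoTermWave m φ z| ≤ K * (1 + |m|) := by
    rw [abs_mul, abs_of_pos hK]
    gcongr
    exact abs_twoTermWave_le m φ hz
  have hwave' : |K * (twoTermWaveDeriv m φ z + sin (z - φ))| ≤ K * |m| / z := by
    rw [abs_mul, abs_of_pos hK, mul_div_assoc]
    gcongr
    exact abs_twoTermWaveDeriv_add_sin_le m φ hz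
  have hsin : |K * sin (z - φ)| ≤ K := by
    rw [abs_mul, abs_of_pos hK]
    exact mul_le_of_le_one_right hK.le (abs_sin_le_one _)
  have hF'_add : |liouvilleBesselDeriv a z + K * sin (z - φ)| ≤ (C + K * |m|) / z := by
    rw [add_div]
    refine (abs_add_le (liouvilleBesselDeriv a z - K * twoTermWaveDeriv m φ z)
      (K * (twoTermWaveDeriv m φ z + sin (z - φ)))).trans' (le_of_eq ?_) |>.trans
      (add_le_add (hF'.trans hsq) hwave')
    ring_nf
  have hdiv : (C + K * |m|) / z ≤ C + K * |m| := div_le_self (by positivity) hz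
  refine ⟨?_, ?_, hF'_add.trans ?_⟩
  · have := abs_add_le (liouvilleBessel a z - K * twoTermWave m φ z) (K * twoTermWave m φ z)
    rw [sub_add_cancel] at this
    linarith
  · have := abs_sub (liouvilleBesselDeriv a z + K * sin (z - φ)) (K * sin (z - φ))
    rw [add_sub_cancel_right] at this
    linarith
  · gcongr
    linarith

end LiouvilleBesselAsymptotics

/-! ### Perturbation of Bessel's equation -/

section Energy

lemma mul_exp_neg_le_of_deriv_le {T T' Φ φ : ℝ → ℝ} {s t : ℝ} (hst : s ≤ t)
    (hT : ∀ x ∈ Icc s t, HasDerivAt T (T' x) x) (hΦ : ∀ x ∈ Icc s t, HasDerivAt Φ (φ x) x)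
    (hle : ∀ x ∈ Icc s t, T' x ≤ φ x * T x) :
    T t * exp (-Φ t) ≤ T s * exp (-Φ s) := by
  have hderiv (x : ℝ) (hx : x ∈ Icc s t) :
      HasDerivAt (fun x => T x * exp (-Φ x)) ((T' x - φ x * T x) * exp (-Φ x)) x :=
    ((hT x hx).mul (hΦ x hx).fun_neg.exp).congr_deriv (by ring)
  have hanti : AntitoneOn (fun x => T x * exp (-Φ x)) (Icc s t) := by
    refine antitoneOn_of_hasDerivWithinAt_nonpos (convex_Icc s t)
      (fun x hx => (hderiv x hx).continuousAt.continuousWithinAt)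
      (fun x hx => (hderiv x (interior_subset hx)).hasDerivWithinAt) fun x hx => ?_
    exact mul_nonpos_of_nonpos_of_nonneg (by linarith [hle x (interior_subset hx)]) (exp_pos _).le
  exact hanti (left_mem_Icc.2 hst) (right_mem_Icc.2 hst) hst

variable {e e' e'' Φ φ : ℝ → ℝ} {η s t : ℝ}

lemma energy_le_mul_exp (hst : s ≤ t) (he : ∀ x ∈ Icc s t, HasDerivAt e (e' x) x)
    (he' : ∀ x ∈ Icc s t, HasDerivAt e' (e'' x) x) (hΦ : ∀ x ∈ Icc s t, HasDerivAt Φ (φ x) x)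
    (hφ : ∀ x ∈ Icc s t, 0 ≤ φ x)
    (hforce : ∀ x ∈ Icc s t, e' x * (e'' x + e x) ≤ |e' x| * (φ x * (|e x| + η))) :
    e' t ^ 2 + e t ^ 2 + η ^ 2 ≤
      (e' s ^ 2 + e s ^ 2 + η ^ 2) * exp (2 * (Φ t - Φ s)) := by
  have h := mul_exp_neg_le_of_deriv_le hst (T := fun x => e' x ^ 2 + e x ^ 2 + η ^ 2)
    (T' := fun x => 2 * (e' x * (e'' x + e x))) (fun x hx => ?_)
    (fun x hx => (hΦ x hx).const_mul 2) fun x hx => ?_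
  · rw [exp_neg, exp_neg, ← div_eq_mul_inv, ← div_eq_mul_inv, div_le_iff₀ (exp_pos _)] at h
    rw [mul_sub, exp_sub]
    exact h.trans_eq (by ring)
  · exact ((((he' x hx).fun_pow 2).fun_add ((he x hx).fun_pow 2)).add_const (η ^ 2)).congr_deriv
      (by push_cast; ring)
  · have hcross : 2 * (|e' x| * (|e x| + η)) ≤ 2 * (e' x ^ 2 + e x ^ 2 + η ^ 2) := by
      rw [← sq_abs (e' x), ← sq_abs (e x)]
      nlinarith [sq_nonneg (|e' x| - |e x|), sq_nonneg (|e' x| - η), sq_nonneg |e x|, sq_nonneg η]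
    nlinarith [hforce x hx, mul_le_mul_of_nonneg_left hcross (hφ x hx)]

lemma abs_le_mul_exp_of_abs_deriv_deriv_add_le (hst : s ≤ t)
    (he : ∀ x ∈ Icc s t, HasDerivAt e (e' x) x) (he' : ∀ x ∈ Icc s t, HasDerivAt e' (e'' x) x)
    (hΦ : ∀ x ∈ Icc s t, HasDerivAt Φ (φ x) x) (hφ : ∀ x ∈ Icc s t, 0 ≤ φ x)
    (hforce : ∀ x ∈ Icc s t, |e'' x + e x| ≤ φ x * (|e x| + η)) {C R : ℝ}
    (hη : 0 ≤ η) (hes : |e s| ≤ C * η) (hes' : |e' s| ≤ C * η) (hR : Φ t - Φ s ≤ R) :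
    |e t| ≤ √(2 * C ^ 2 + 1) * exp R * η := by
  have henergy := energy_le_mul_exp hst he he' hΦ hφ fun x hx => by
    refine (le_abs_self _).trans ?_
    rw [abs_mul]
    exact mul_le_mul_of_nonneg_left (hforce x hx) (abs_nonneg _)
  have hinit := sq_le_sq' (abs_le.1 hes).1 (abs_le.1 hes).2
  have hinit' := sq_le_sq' (abs_le.1 hes').1 (abs_le.1 hes').2
  refine abs_le_of_sq_le_sq ?_ (by positivity)
  calc _ ≤ _ := le_add_of_le_of_nonneg (le_add_of_nonneg_left (sq_nonneg _)) (sq_nonneg η)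
    _ ≤ _ := henergy
    _ ≤ ((C * η) ^ 2 + (C * η) ^ 2 + η ^ 2) * exp (2 * R) := by gcongr
    _ = (√(2 * C ^ 2 + 1) * exp R * η) ^ 2 := by
      rw [mul_pow (_ * _) η, mul_pow (√_), sq_sqrt (by positivity), ← exp_nat_mul]
      push_cast
      ring

lemma energy_le_of_tendsto_zero (ht : 0 < t) {D : ℝ} (hD : 0 ≤ D)
    (he : ∀ x ∈ Ioc 0 t, HasDerivAt e (e' x) x) (he' : ∀ x ∈ Ioc 0 t, HasDerivAt e' (e'' x) x)
    (hforce : ∀ x ∈ Ioc 0 t, e' x * (e'' x + e x) ≤ |e' x| * (D * (|e x| + η)))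
    (hlim : Tendsto e (𝓝[>] 0) (𝓝 0)) (hlim' : Tendsto e' (𝓝[>] 0) (𝓝 0)) :
    e' t ^ 2 + e t ^ 2 + η ^ 2 ≤ η ^ 2 * exp (2 * D * t) := by
  have henergy : Tendsto (fun s => (e' s ^ 2 + e s ^ 2 + η ^ 2) * exp (2 * (D * t - D * s)))
      (𝓝[>] 0) (𝓝 ((0 ^ 2 + 0 ^ 2 + η ^ 2) * exp (2 * (D * t - D * 0)))) := by
    have hexp : Tendsto (fun s => exp (2 * (D * t - D * s))) (𝓝[>] 0)
        (𝓝 (exp (2 * (D * t - D * 0)))) :=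
      (Continuous.tendsto (by fun_prop) 0).mono_left nhdsWithin_le_nhds
    exact (((hlim'.pow 2).add (hlim.pow 2)).add_const _).mul hexp
  refine (ge_of_tendsto henergy ?_).trans_eq (by ring_nf)
  filter_upwards [Ioo_mem_nhdsGT ht] with s hs
  have hsub {x : ℝ} (hx : x ∈ Icc s t) : x ∈ Ioc 0 t := ⟨hs.1.trans_le hx.1, hx.2⟩
  exact energy_le_mul_exp (Φ := fun x => D * x) (φ := fun _ => D) hs.2.le
    (fun x hx => he x (hsub hx)) (fun x hx => he' x (hsub hx))
    (fun x _ => by simpa using (hasDerivAt_id x).const_mul D) (fun _ _ => hD)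
    (fun x hx => hforce x (hsub hx))

end Energy

/-- `Y` is the solution on `(0, Z]`, with derivative `Y'`, of the perturbed Bessel equation
`Y'' + (2a + 1) / z * Y' + (1 + q) Y = 0` satisfying `Y(0) = 1` and `Y'(0) = 0`. -/
structure IsPerturbedBessel (a Z : ℝ) (q Y Y' : ℝ → ℝ) : Prop where
  hasDerivAt : ∀ z ∈ Ioc 0 Z, HasDerivAt Y (Y' z) z
  hasDerivAt_deriv : ∀ z ∈ Ioc 0 Z,
    HasDerivAt Y' (-(2 * (a + 1 / 2) / z) * Y' z - (1 + q z) * Y z) z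
  tendsto_one : Tendsto Y (𝓝[>] 0) (𝓝 1)
  tendsto_deriv_zero : Tendsto Y' (𝓝[>] 0) (𝓝 0)

section PerturbedBessel

variable {a Z : ℝ} {q Y Y' : ℝ → ℝ}

lemma abs_mul_le_of_abs_le {q y f D η : ℝ} (hD : 0 ≤ D) (hη : 0 ≤ η) (hη1 : η ≤ 1)
    (hq : |q| ≤ D * η) (hf : |f| ≤ 1) : |q * y| ≤ D * (|y - f| + η) := by
  have hy : |y| ≤ |y - f| + 1 := by
    have h := abs_add_le (y - f) f
    rw [sub_add_cancel] at h
    linarith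
  calc |q * y| = |q| * |y| := abs_mul _ _
    _ ≤ D * η * (|y - f| + 1) := by gcongr
    _ = D * (η * |y - f| + η) := by ring
    _ ≤ D * (|y - f| + η) := by gcongr; exact mul_le_of_le_one_left (abs_nonneg _) hη1

lemma IsPerturbedBessel.abs_sub_normBessel_le (hY : IsPerturbedBessel a Z q Y Y') (ha : 1 / 2 ≤ a)
    {D η : ℝ} (hD : 0 ≤ D) (hη : 0 ≤ η) (hη1 : η ≤ 1) (hq : ∀ z ∈ Ioc 0 Z, |q z| ≤ D * η) {z : ℝ}
    (hz : z ∈ Ioc 0 Z) :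
    |Y z - normBessel a z| ≤ η * exp (D * z) ∧
      |Y' z - normBesselDeriv a z| ≤ η * exp (D * z) := by
  have hsub {x : ℝ} (hx : x ∈ Ioc 0 z) : x ∈ Ioc 0 Z := ⟨hx.1, hx.2.trans hz.2⟩
  have hlim : Tendsto (fun z => Y z - normBessel a z) (𝓝[>] 0) (𝓝 0) := by
    have h := (hasDerivAt_normBessel ha 0).continuousAt.tendsto.mono_left
      (nhdsWithin_le_nhds (s := Ioi 0))
    simpa [normBessel_zero ha] using hY.tendsto_one.sub h
  have hlim' : Tendsto (fun z => Y' z - normBesselDeriv a z) (𝓝[>] 0) (𝓝 0) := by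
    have h := ((continuous_normBesselDeriv ha).tendsto 0).mono_left
      (nhdsWithin_le_nhds (s := Ioi 0))
    simpa [normBesselDeriv_zero] using hY.tendsto_deriv_zero.sub h
  have henergy := energy_le_of_tendsto_zero (η := η) hz.1 hD
    (fun x hx => (hY.hasDerivAt x (hsub hx)).fun_sub (hasDerivAt_normBessel ha x))
    (fun x hx => (hY.hasDerivAt_deriv x (hsub hx)).fun_sub
      (hasDerivAt_normBesselDeriv ha hx.1.ne')) (fun x hx => ?_) hlim hlim'
  · have hexp : η ^ 2 * exp (2 * D * z) = (η * exp (D * z)) ^ 2 := by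
      rw [mul_pow, ← exp_nat_mul]
      push_cast
      ring_nf
    rw [hexp] at henergy
    have hpos : 0 ≤ η * exp (D * z) := by positivity
    constructor <;> refine abs_le_of_sq_le_sq ?_ hpos <;> nlinarith
  · set e := Y x - normBessel a x with he_def
    set e' := Y' x - normBesselDeriv a x with he'_def
    have hdamp : 0 ≤ 2 * (a + 1 / 2) / x * e' ^ 2 := by
      have := hx.1
      positivity
    have hqY : |q x * Y x| ≤ D * (|e| + η) :=
      abs_mul_le_of_abs_le hD hη hη1 (hq x (hsub hx)) (abs_normBessel_le_one ha x)
    have hforce : |e' * (q x * Y x)| ≤ |e'| * (D * (|e| + η)) := by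
      rw [abs_mul]
      gcongr
    calc _ = -(2 * (a + 1 / 2) / x * e' ^ 2) - e' * (q x * Y x) := by
          rw [he_def, he'_def]
          ring
      _ ≤ |e'| * (D * (|e| + η)) := by linarith [neg_abs_le (e' * (q x * Y x))]

end PerturbedBessel

/-- `b`, with derivatives `b'` and `b''`, is a phase correction on `(0, Z]` that varies at the slow
scale `N`: it is `B(z / N) / N` for a function `B` vanishing at `0` whose first two derivatives are
bounded by `K`. -/
structure IsSlowModulation (K N Z : ℝ) (b b' b'' : ℝ → ℝ) : Prop where
  hasDerivAt : ∀ z ∈ Ioc 0 Z, HasDerivAt b (b' z) z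
  hasDerivAt_deriv : ∀ z ∈ Ioc 0 Z, HasDerivAt b' (b'' z) z
  abs_apply_le : ∀ z ∈ Ioc 0 Z, |b z| ≤ K * z / N ^ 2
  abs_deriv_le : ∀ z ∈ Ioc 0 Z, |b' z| ≤ K / N ^ 2
  abs_deriv_deriv_le : ∀ z ∈ Ioc 0 Z, |b'' z| ≤ K / N ^ 3

/-- The defect of `F + b F'` as a solution of `U'' + (1 - m / z² + 2 b') U = 0`, where
`F'' + (1 - m / z²) F = 0`. -/
noncomputable def modulationDefect (m : ℝ) (F F' b b' b'' : ℝ → ℝ) (z : ℝ) : ℝ :=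
  (b'' z + 2 * b z * b' z) * F' z + 2 * m / z ^ 2 * (b' z - b z / z) * F z

section Modulation

variable {m z : ℝ} {F F' b b' b'' : ℝ → ℝ}

lemma hasDerivAt_add_mul_deriv (hF : HasDerivAt F (F' z) z)
    (hF' : HasDerivAt F' (-(1 - m / z ^ 2) * F z) z) (hb : HasDerivAt b (b' z) z) :
    HasDerivAt (fun z => F z + b z * F' z)
      ((1 + b' z) * F' z - b z * ((1 - m / z ^ 2) * F z)) z :=
  (hF.fun_add (hb.fun_mul hF')).congr_deriv (by ring)

lemma hasDerivAt_deriv_add_mul_deriv (hz : z ≠ 0) (hF : HasDerivAt F (F' z) z)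
    (hF' : HasDerivAt F' (-(1 - m / z ^ 2) * F z) z) (hb : HasDerivAt b (b' z) z)
    (hb' : HasDerivAt b' (b'' z) z) :
    HasDerivAt (fun z => (1 + b' z) * F' z - b z * ((1 - m / z ^ 2) * F z))
      (modulationDefect m F F' b b' b'' z - (1 - m / z ^ 2 + 2 * b' z) * (F z + b z * F' z)) z := by
  have hpot : HasDerivAt (fun z => 1 - m / z ^ 2) (2 * m / z ^ 3) z := by
    refine ((((hasDerivAt_pow 2 z).fun_inv (pow_ne_zero 2 hz)).const_mul m).const_sub 1).congr_deriv
      ?_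
    field_simp
    push_cast
    ring
  refine (((hb'.const_add 1).fun_mul hF').fun_sub
    (hb.fun_mul (hpot.fun_mul hF))).congr_deriv ?_
  rw [modulationDefect]
  field_simp
  ring

end Modulation

section SlowModulation

variable {a δ m z K N Z C : ℝ} {F F' b b' b'' Y Y' : ℝ → ℝ}

lemma IsSlowModulation.abs_modulationDefect_le (hb : IsSlowModulation K N Z b b' b'')
    (hm : 0 ≤ m) (hK : 0 ≤ K) (hN : 1 ≤ N) (hZ : Z ≤ δ * N) (hz : z ∈ Icc 1 Z)
    (hF : |F z| ≤ C) (hF' : |F' z| ≤ C) :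
    |modulationDefect m F F' b b' b'' z| ≤
      C * (K + 2 * K ^ 2 * δ + 4 * m * K) * (1 / z ^ 2 + 1 / N) * (1 / N ^ 2) := by
  have hz' : z ∈ Ioc 0 Z := ⟨by linarith [hz.1], hz.2⟩
  have hz0 := hz'.1
  have : 0 < N := by linarith
  have hC : 0 ≤ C := (abs_nonneg _).trans hF
  have hδ : 0 ≤ δ := by
    by_contra! h
    nlinarith [hz.1, hz.2]
  have hbz := hb.abs_apply_le z hz'
  have hbz' := hb.abs_deriv_le z hz'
  have hfast : |b'' z + 2 * b z * b' z| ≤ (K + 2 * K ^ 2 * δ) * (1 / N * (1 / N ^ 2)) := by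
    calc _ ≤ |b'' z| + |2 * b z * b' z| := abs_add_le _ _
      _ = |b'' z| + 2 * |b z| * |b' z| := by rw [abs_mul, abs_mul, abs_two]
      _ ≤ K / N ^ 3 + 2 * (K * (δ * N) / N ^ 2) * (K / N ^ 2) := by
          gcongr
          · exact hb.abs_deriv_deriv_le z hz'
          · exact hbz.trans (by gcongr; exact hz.2.trans hZ)
      _ = _ := by
          field_simp
  have hslow : |2 * m / z ^ 2 * (b' z - b z / z)| ≤ 4 * m * K * (1 / z ^ 2 * (1 / N ^ 2)) := by
    calc _ = 2 * m / z ^ 2 * |b' z - b z / z| := by rw [abs_mul, abs_of_nonneg (by positivity)]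
      _ ≤ 2 * m / z ^ 2 * (|b' z| + |b z / z|) := by gcongr; exact abs_sub _ _
      _ = 2 * m / z ^ 2 * (|b' z| + |b z| / z) := by rw [abs_div, abs_of_pos hz0]
      _ ≤ 2 * m / z ^ 2 * (K / N ^ 2 + K * z / N ^ 2 / z) := by gcongr
      _ = _ := by
          field_simp
          ring
  calc _ ≤ |b'' z + 2 * b z * b' z| * |F' z| + |2 * m / z ^ 2 * (b' z - b z / z)| * |F z| := by
        rw [← abs_mul, ← abs_mul]
        exact abs_add_le _ _
    _ ≤ (K + 2 * K ^ 2 * δ) * (1 / N * (1 / N ^ 2)) * C +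
        4 * m * K * (1 / z ^ 2 * (1 / N ^ 2)) * C := by gcongr
    _ ≤ (K + 2 * K ^ 2 * δ) * ((1 / z ^ 2 + 1 / N) * (1 / N ^ 2)) * C +
        4 * m * K * ((1 / z ^ 2 + 1 / N) * (1 / N ^ 2)) * C := by
        gcongr
        · exact le_add_of_nonneg_left (by positivity)
        · exact le_add_of_nonneg_right (by positivity)
    _ = _ := by ring

lemma IsPerturbedBessel.hasDerivAt_rpow_mul {q : ℝ → ℝ} (hY : IsPerturbedBessel a Z q Y Y')
    (hz : z ∈ Ioc 0 Z) :
    HasDerivAt (fun z => z ^ (a + 1 / 2) * Y z)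
      (z ^ (a + 1 / 2) * (Y' z + (a + 1 / 2) / z * Y z)) z :=
  _root_.hasDerivAt_rpow_mul hz.1 (hY.hasDerivAt z hz)

lemma IsPerturbedBessel.hasDerivAt_rpow_mul_add_div_mul {q : ℝ → ℝ}
    (hY : IsPerturbedBessel a Z q Y Y') (hz : z ∈ Ioc 0 Z) :
    HasDerivAt (fun z => z ^ (a + 1 / 2) * (Y' z + (a + 1 / 2) / z * Y z))
      (-(1 - (a ^ 2 - 1 / 4) / z ^ 2 + q z) * (z ^ (a + 1 / 2) * Y z)) z := by
  refine (_root_.hasDerivAt_rpow_mul_add_div_mul hz.1 (hY.hasDerivAt z hz)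
    (hY.hasDerivAt_deriv z hz)).congr_deriv ?_
  ring

lemma IsSlowModulation.abs_sub_normBessel_le (hb : IsSlowModulation K N Z b b' b'')
    (hY : IsPerturbedBessel a Z (fun z => 2 * b' z) Y Y') (ha : 1 / 2 ≤ a) (hK : 0 ≤ K)
    (hN : 1 ≤ N) (hz : z ∈ Ioc 0 Z) :
    |Y z - normBessel a z| ≤ 1 / N ^ 2 * exp (2 * K * z) ∧
      |Y' z - normBesselDeriv a z| ≤ 1 / N ^ 2 * exp (2 * K * z) := by
  have hη : 1 / N ^ 2 ≤ 1 := by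
    rw [div_le_one (by positivity)]
    exact one_le_pow₀ hN
  refine hY.abs_sub_normBessel_le ha (by positivity) (by positivity) hη (fun x hx => ?_) hz
  have hbx := hb.abs_deriv_le x hx
  rw [abs_mul, abs_two]
  calc 2 * |b' x| ≤ 2 * (K / N ^ 2) := by gcongr
    _ = 2 * K * (1 / N ^ 2) := by ring

lemma IsSlowModulation.abs_initial_le (hb : IsSlowModulation K N Z b b' b'')
    (hY : IsPerturbedBessel a Z (fun z => 2 * b' z) Y Y') (ha : 1 / 2 ≤ a) (hK : 0 ≤ K)
    (hN : 1 ≤ N) (hZ : 1 ≤ Z) (hF : |liouvilleBessel a 1| ≤ C)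
    (hF' : |liouvilleBesselDeriv a 1| ≤ C) :
    |Y 1 - (liouvilleBessel a 1 + b 1 * liouvilleBesselDeriv a 1)| ≤
        ((a + 3 / 2) * exp (2 * K) + K * C * (a ^ 2 + 2)) * (1 / N ^ 2) ∧
      |Y' 1 + (a + 1 / 2) * Y 1 - ((1 + b' 1) * liouvilleBesselDeriv a 1 -
        b 1 * ((1 - (a ^ 2 - 1 / 4)) * liouvilleBessel a 1))| ≤
        ((a + 3 / 2) * exp (2 * K) + K * C * (a ^ 2 + 2)) * (1 / N ^ 2) := by
  have h1 : (1 : ℝ) ∈ Ioc 0 Z := ⟨one_pos, hZ⟩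
  have hC : 0 ≤ C := (abs_nonneg _).trans hF
  obtain ⟨hY₀, hY₁⟩ := hb.abs_sub_normBessel_le hY ha hK hN h1
  have hb₀ : |b 1| ≤ K * (1 / N ^ 2) := (hb.abs_apply_le 1 h1).trans_eq (by ring)
  have hb₁ : |b' 1| ≤ K * (1 / N ^ 2) := (hb.abs_deriv_le 1 h1).trans_eq (by ring)
  have hbF {x y : ℝ} (hx : |x| ≤ K * (1 / N ^ 2)) (hy : |y| ≤ C) :
      |x * y| ≤ K * (1 / N ^ 2) * C := by
    rw [abs_mul]
    gcongr
  have hFb₀ := abs_le.1 (hbF hb₀ hF')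
  have hFb₁ := abs_le.1 (hbF hb₁ hF')
  have hρF : |(1 - (a ^ 2 - 1 / 4)) * liouvilleBessel a 1| ≤ (a ^ 2 + 1) * C := by
    rw [abs_mul]
    gcongr
    rw [abs_le]
    constructor <;> nlinarith [sq_nonneg a]
  have hρ : |b 1 * ((1 - (a ^ 2 - 1 / 4)) * liouvilleBessel a 1)| ≤
      K * (1 / N ^ 2) * ((a ^ 2 + 1) * C) := by
    rw [abs_mul]
    gcongr
  have hA : |(a + 1 / 2) * (Y 1 - normBessel a 1)| ≤
      (a + 1 / 2) * (1 / N ^ 2 * exp (2 * K * 1)) := by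
    rw [abs_mul, abs_of_nonneg (by linarith)]
    gcongr
  rw [show liouvilleBessel a 1 = normBessel a 1 by simp [liouvilleBessel]] at hρ ⊢
  rw [show liouvilleBesselDeriv a 1 = normBesselDeriv a 1 + (a + 1 / 2) * normBessel a 1 by
    simp [liouvilleBesselDeriv]] at hFb₀ hFb₁ ⊢
  rw [mul_one] at hY₀ hY₁ hA
  have hrest : 0 ≤ ((a + 1 / 2) * exp (2 * K) + K * C * (a ^ 2 + 1)) * (1 / N ^ 2) := by
    positivity
  rw [abs_le] at hY₀ hY₁ hA hρ
  constructor <;> rw [abs_le] <;> constructor <;> linarith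

lemma IsSlowModulation.abs_forcing_le (hb : IsSlowModulation K N Z b b' b'') (hm : 0 ≤ m)
    (hK : 0 ≤ K) (hN : 1 ≤ N) (hZ : Z ≤ δ * N) (hz : z ∈ Icc 1 Z) (hF : |F z| ≤ C)
    (hF' : |F' z| ≤ C) (U : ℝ) :
    |-(1 - m / z ^ 2 + 2 * b' z) * U - (modulationDefect m F F' b b' b'' z -
        (1 - m / z ^ 2 + 2 * b' z) * (F z + b z * F' z)) + (U - (F z + b z * F' z))| ≤
      (m + 2 * K + C * (K + 2 * K ^ 2 * δ + 4 * m * K)) * (1 / z ^ 2 + 1 / N) *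
        (|U - (F z + b z * F' z)| + 1 / N ^ 2) := by
  have hdefect := hb.abs_modulationDefect_le hm hK hN hZ hz hF hF'
  have hb' := hb.abs_deriv_le z ⟨by linarith [hz.1], hz.2⟩
  set e := U - (F z + b z * F' z) with he
  set P := C * (K + 2 * K ^ 2 * δ + 4 * m * K)
  have hP : 0 ≤ P * (1 / z ^ 2 + 1 / N) := by
    have hN2 : 0 < 1 / N ^ 2 := by positivity
    exact nonneg_of_mul_nonneg_left ((abs_nonneg _).trans hdefect) hN2
  have hcoeff : |m / z ^ 2 - 2 * b' z| ≤ (m + 2 * K) * (1 / z ^ 2 + 1 / N) := by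
    have hNN : K / N ^ 2 ≤ K * (1 / N) := by
      rw [div_eq_mul_one_div]
      gcongr
      exact le_self_pow₀ hN two_ne_zero
    have : 0 ≤ m * (1 / N) := by positivity
    have : 0 ≤ 2 * K * (1 / z ^ 2) := by positivity
    calc _ ≤ |m / z ^ 2| + |2 * b' z| := abs_sub _ _
      _ = m * (1 / z ^ 2) + 2 * |b' z| := by
        rw [abs_of_nonneg (by positivity), abs_mul, abs_two]
        ring
      _ ≤ _ := by linarith
  calc _ = |(m / z ^ 2 - 2 * b' z) * e - modulationDefect m F F' b b' b'' z| := by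
        rw [he]
        ring_nf
    _ ≤ |m / z ^ 2 - 2 * b' z| * |e| + |modulationDefect m F F' b b' b'' z| := by
        rw [← abs_mul]
        exact abs_sub _ _
    _ ≤ (m + 2 * K) * (1 / z ^ 2 + 1 / N) * |e| + P * (1 / z ^ 2 + 1 / N) * (1 / N ^ 2) := by
        gcongr
    _ ≤ (m + 2 * K) * (1 / z ^ 2 + 1 / N) * (|e| + 1 / N ^ 2) +
        P * (1 / z ^ 2 + 1 / N) * (|e| + 1 / N ^ 2) := by
        gcongr
        · exact le_add_of_nonneg_right (by positivity)
        · exact le_add_of_nonneg_left (abs_nonneg _)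
    _ = _ := by ring

theorem exists_abs_sub_modulation_le (ha : 1 / 2 < a) (hK : 0 ≤ K) (hδ : 0 ≤ δ) :
    ∃ C, 0 ≤ C ∧ ∀ ⦃N Z : ℝ⦄ ⦃b b' b'' Y Y' : ℝ → ℝ⦄, 1 ≤ N → Z ≤ δ * N →
      IsSlowModulation K N Z b b' b'' → IsPerturbedBessel a Z (fun z => 2 * b' z) Y Y' →
        ∀ z ∈ Icc 1 Z, |z ^ (a + 1 / 2) * Y z -
          (liouvilleBessel a z + b z * liouvilleBesselDeriv a z)| ≤ C * (1 / N ^ 2) := by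
  obtain ⟨C, hC, hbound⟩ := exists_abs_liouvilleBessel_le ha
  have hm : 0 ≤ a ^ 2 - 1 / 4 := by nlinarith
  set P := a ^ 2 - 1 / 4 + 2 * K + C * (K + 2 * K ^ 2 * δ + 4 * (a ^ 2 - 1 / 4) * K)
  have : 0 ≤ P := by positivity
  set C₀ := (a + 3 / 2) * exp (2 * K) + K * C * (a ^ 2 + 2) with hC₀
  refine ⟨√(2 * C₀ ^ 2 + 1) * exp (P * (δ + 1)), by positivity,
    fun N Z b b' b'' Y Y' hN hZ hb hY z hz => ?_⟩
  have hN0 : 0 < N := by linarith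
  have hIoc {x : ℝ} (hx : x ∈ Icc 1 z) : x ∈ Ioc 0 Z := ⟨by linarith [hx.1], hx.2.trans hz.2⟩
  have hF (x : ℝ) (hx : x ∈ Icc 1 z) := hasDerivAt_liouvilleBessel ha.le (hIoc hx).1
  have hF' (x : ℝ) (hx : x ∈ Icc 1 z) := hasDerivAt_liouvilleBesselDeriv ha.le (hIoc hx).1
  have hinit := hb.abs_initial_le hY ha.le hK hN (hz.1.trans hz.2) (hbound 1 le_rfl).1
    (hbound 1 le_rfl).2.1
  refine abs_le_mul_exp_of_abs_deriv_deriv_add_le (Φ := fun x => P * (x / N - 1 / x))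
    (φ := fun x => P * (1 / x ^ 2 + 1 / N)) hz.1
    (fun x hx => (hY.hasDerivAt_rpow_mul (hIoc hx)).fun_sub
      (hasDerivAt_add_mul_deriv (hF x hx) (hF' x hx) (hb.hasDerivAt x (hIoc hx))))
    (fun x hx => (hY.hasDerivAt_rpow_mul_add_div_mul (hIoc hx)).fun_sub
      (hasDerivAt_deriv_add_mul_deriv (hIoc hx).1.ne' (hF x hx) (hF' x hx)
        (hb.hasDerivAt x (hIoc hx)) (hb.hasDerivAt_deriv x (hIoc hx))))
    (fun x hx => ?_) (fun _ _ => by positivity)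
    (fun x hx => hb.abs_forcing_le hm hK hN hZ ⟨hx.1, hx.2.trans hz.2⟩ (hbound x hx.1).1
      (hbound x hx.1).2.1 _)
    (by positivity) (by simpa [hC₀] using hinit.1) (by simpa [hC₀] using hinit.2) ?_
  · refine ((((hasDerivAt_id x).div_const N).fun_sub
      ((hasDerivAt_inv (hIoc hx).1.ne').const_mul 1)).const_mul P).congr_deriv ?_
    ring
  · have hzN : z / N ≤ δ := by
      rw [div_le_iff₀ hN0]
      exact hz.2.trans hZ
    have : 0 ≤ 1 / z := by
      have := hz.1
      positivity
    have : 0 ≤ 1 / N := by positivity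
    rw [← mul_sub]
    gcongr
    linarith

theorem exists_abs_rpow_mul_sub_le (ha : 1 / 2 < a) (hK : 0 ≤ K) (hδ : 0 ≤ δ) :
    ∃ C, 0 ≤ C ∧ ∀ ⦃N Z : ℝ⦄ ⦃b b' b'' Y Y' : ℝ → ℝ⦄, 1 ≤ N → Z ≤ δ * N →
      IsSlowModulation K N Z b b' b'' → IsPerturbedBessel a Z (fun z => 2 * b' z) Y Y' →
        ∀ z ∈ Icc 1 Z, |z ^ (a + 1 / 2) * Y z - besselAmplitude a *
          (cos (z - (a + 1 / 2) * π / 2) - (b z + (a ^ 2 - 1 / 4) / (2 * z)) *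
            sin (z - (a + 1 / 2) * π / 2))| ≤ C / z ^ 2 := by
  obtain ⟨C₁, hC₁, hY_bound⟩ := exists_abs_sub_modulation_le ha hK hδ
  obtain ⟨C₂, hC₂, hwave⟩ := exists_abs_liouvilleBessel_sub_twoTermWave_le ha
  obtain ⟨C₃, hC₃, hbessel⟩ := exists_abs_liouvilleBessel_le ha
  refine ⟨C₁ * δ ^ 2 + C₂ + K * C₃ * δ ^ 2, by positivity, fun N Z b b' b'' Y Y' hN hZ hb hY z hz
    => ?_⟩
  have hz0 : 0 < z := by linarith [hz.1]
  have hNz : 1 / N ^ 2 ≤ δ ^ 2 / z ^ 2 := by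
    rw [div_le_div_iff₀ (by positivity) (by positivity), one_mul, ← mul_pow]
    gcongr
    exact hz.2.trans hZ
  set ω := z - (a + 1 / 2) * π / 2
  set κ := besselAmplitude a
  have hphase : |b z * (liouvilleBesselDeriv a z + κ * sin ω)| ≤ K * C₃ * (1 / N ^ 2) := by
    calc _ = |b z| * |liouvilleBesselDeriv a z + κ * sin ω| := abs_mul _ _
      _ ≤ K * z / N ^ 2 * (C₃ / z) := by
          gcongr
          exacts [hb.abs_apply_le z ⟨hz0, hz.2⟩, (hbessel z hz.1).2.2]
      _ = K * C₃ * (1 / N ^ 2) := by field_simp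
  have hY_z := hY_bound hN hZ hb hY z hz
  have hwave_z := (hwave z hz.1).1
  rw [twoTermWave] at hwave_z
  calc _ = |(z ^ (a + 1 / 2) * Y z - (liouvilleBessel a z + b z * liouvilleBesselDeriv a z)) +
        (liouvilleBessel a z - κ * (cos ω - (a ^ 2 - 1 / 4) / (2 * z) * sin ω)) +
        b z * (liouvilleBesselDeriv a z + κ * sin ω)| := by ring_nf
    _ ≤ C₁ * (1 / N ^ 2) + C₂ / z ^ 2 + K * C₃ * (1 / N ^ 2) :=
      (abs_add_three _ _ _).trans (by gcongr)
    _ ≤ C₁ * (δ ^ 2 / z ^ 2) + C₂ / z ^ 2 + K * C₃ * (δ ^ 2 / z ^ 2) := by gcongr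
    _ = _ := by ring

end SlowModulation

/-! ### The Liouville weight -/

section Sinc

variable {x : ℝ}

lemma analyticAt_sinc (x : ℝ) : AnalyticAt ℝ sinc x := by
  rcases eq_or_ne x 0 with rfl | hx
  · rw [sinc_eq_dslope]
    exact (analyticAt_sin.hasFPowerSeriesAt.has_fpower_series_dslope_fslope).analyticAt
  · refine (analyticAt_sin.fun_div analyticAt_id hx).congr ?_
    filter_upwards [isOpen_ne.mem_nhds hx] with y hy using (sinc_of_ne_zero hy).symm

lemma sinc_pos (hx : x ∈ Ico 0 π) : 0 < sinc x := by
  rcases eq_or_lt_of_le hx.1 with rfl | hx0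
  · simp
  · rw [sinc_of_ne_zero hx0.ne']
    exact div_pos (sin_pos_of_pos_of_lt_pi hx0 hx.2) hx0

lemma analyticAt_logDeriv_sinc (hx : x ∈ Ico 0 π) : AnalyticAt ℝ (logDeriv sinc) x :=
  (analyticAt_sinc x).deriv.div (analyticAt_sinc x) (sinc_pos hx).ne'

lemma logDeriv_sinc_zero : logDeriv sinc 0 = 0 := by
  have h : deriv sinc 0 = -deriv sinc 0 := by
    simpa [sinc_neg] using deriv_comp_neg sinc 0
  rw [logDeriv_apply, show deriv sinc 0 = 0 by linarith, zero_div]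

lemma logDeriv_sinc (hx : x ∈ Ioo 0 π) : logDeriv sinc x = cot x - 1 / x := by
  have hx0 := hx.1.ne'
  have hsin := (sin_pos_of_mem_Ioo hx).ne'
  have heq : sinc =ᶠ[𝓝 x] fun y => sin y / y := by
    filter_upwards [isOpen_ne.mem_nhds hx0] with y hy using sinc_of_ne_zero hy
  rw [logDeriv_apply, heq.deriv_eq, heq.eq_of_nhds,
    ((hasDerivAt_sin x).fun_div (hasDerivAt_id' x) hx0).deriv, cot_eq_cos_div_sin]
  field_simp

lemma hasDerivAt_logDeriv_sinc (hx : x ∈ Ioo 0 π) :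
    HasDerivAt (logDeriv sinc) (1 / x ^ 2 - 1 / sin x ^ 2) x := by
  have hx0 := hx.1.ne'
  have hsin := (sin_pos_of_mem_Ioo hx).ne'
  have h := ((hasDerivAt_cos x).fun_div (hasDerivAt_sin x) hsin).fun_sub
    ((hasDerivAt_inv hx0).const_mul 1)
  refine (h.congr_of_eventuallyEq ?_).congr_deriv ?_
  · filter_upwards [isOpen_Ioo.mem_nhds hx] with y hy
    rw [logDeriv_sinc hy, cot_eq_cos_div_sin, div_eq_mul_inv 1 y]
  · have := sin_sq_add_cos_sq x
    field_simp
    linear_combination -x ^ 2 * this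

end Sinc

/-- The function `μ/4 (cot(θ/2) - 2/θ) - ν/4 tan(θ/2)`, continued analytically to `θ = 0`. -/
noncomputable def liouvilleCorrection (μ ν θ : ℝ) : ℝ :=
  μ / 4 * logDeriv sinc (θ / 2) - ν / 4 * tan (θ / 2)

section LiouvilleCorrection

variable {μ ν θ δ : ℝ}

lemma liouvilleCorrection_zero (μ ν : ℝ) : liouvilleCorrection μ ν 0 = 0 := by
  simp [liouvilleCorrection, logDeriv_sinc_zero]

lemma cos_half_pos (hθ : θ ∈ Ico 0 π) : 0 < cos (θ / 2) :=
  cos_pos_of_mem_Ioo ⟨by linarith [pi_pos, hθ.1], by linarith [hθ.2]⟩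

lemma sin_half_pos (hθ : θ ∈ Ioo 0 π) : 0 < sin (θ / 2) :=
  sin_pos_of_mem_Ioo ⟨by linarith [hθ.1], by linarith [hθ.1, hθ.2]⟩

lemma analyticAt_liouvilleCorrection (hθ : θ ∈ Ico 0 π) :
    AnalyticAt ℝ (liouvilleCorrection μ ν) θ := by
  have hhalf : AnalyticAt ℝ (fun θ : ℝ => θ / 2) θ := analyticAt_id.div_const
  have hsinc : AnalyticAt ℝ (fun θ => logDeriv sinc (θ / 2)) θ :=
    AnalyticAt.fun_comp
      (analyticAt_logDeriv_sinc ⟨by linarith [hθ.1], by linarith [hθ.1, hθ.2]⟩) hhalf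
  have htan : AnalyticAt ℝ (fun θ => tan (θ / 2)) θ := by
    simp only [tan_eq_sin_div_cos]
    exact (AnalyticAt.fun_comp analyticAt_sin hhalf).fun_div
      (AnalyticAt.fun_comp analyticAt_cos hhalf) (cos_half_pos hθ).ne'
  exact (analyticAt_const.mul hsinc).sub (analyticAt_const.mul htan)

lemma hasDerivAt_liouvilleCorrection (hθ : θ ∈ Ioo 0 π) :
    HasDerivAt (liouvilleCorrection μ ν)
      (μ / 8 * (4 / θ ^ 2 - 1 / sin (θ / 2) ^ 2) - ν / 8 * (1 / cos (θ / 2) ^ 2)) θ := by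
  have hhalf : HasDerivAt (fun θ : ℝ => θ / 2) (1 / 2) θ := (hasDerivAt_id θ).div_const 2
  have hsinc : HasDerivAt (fun θ => logDeriv sinc (θ / 2)) _ θ :=
    (hasDerivAt_logDeriv_sinc ⟨by linarith [hθ.1], by linarith [hθ.1, hθ.2]⟩).comp θ hhalf
  have htan : HasDerivAt (fun θ => tan (θ / 2)) _ θ :=
    HasDerivAt.comp θ (hasDerivAt_tan (cos_half_pos (Ioo_subset_Ico_self hθ)).ne') hhalf
  refine ((hsinc.const_mul (μ / 4)).fun_sub (htan.const_mul (ν / 4))).congr_deriv ?_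
  have := hθ.1.ne'
  field_simp
  ring

lemma exists_abs_liouvilleCorrection_le (μ ν : ℝ) (hδ : δ < π) :
    ∃ K, 0 ≤ K ∧ ∀ θ ∈ Icc 0 δ, |liouvilleCorrection μ ν θ| ≤ K * θ ∧
      |deriv (liouvilleCorrection μ ν) θ| ≤ K ∧
      |deriv (deriv (liouvilleCorrection μ ν)) θ| ≤ K := by
  have han (θ : ℝ) (hθ : θ ∈ Icc 0 δ) : AnalyticAt ℝ (liouvilleCorrection μ ν) θ :=
    analyticAt_liouvilleCorrection ⟨hθ.1, hθ.2.trans_lt hδ⟩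
  obtain ⟨K₁, hK₁⟩ := isCompact_Icc.exists_bound_of_continuousOn
    fun θ hθ => (han θ hθ).deriv.continuousAt.continuousWithinAt
  obtain ⟨K₂, hK₂⟩ := isCompact_Icc.exists_bound_of_continuousOn
    fun θ hθ => (han θ hθ).deriv.deriv.continuousAt.continuousWithinAt
  refine ⟨max 0 (max K₁ K₂), le_max_left _ _, fun θ hθ => ⟨?_, ?_, ?_⟩⟩
  · have hmean := (convex_Icc 0 δ).norm_image_sub_le_of_norm_deriv_le
      (fun x hx => (han x hx).differentiableAt) hK₁ (left_mem_Icc.2 (hθ.1.trans hθ.2)) hθ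
    rw [liouvilleCorrection_zero, sub_zero, sub_zero, norm_of_nonneg hθ.1] at hmean
    exact hmean.trans (mul_le_mul_of_nonneg_right (by simp) hθ.1)
  · exact (hK₁ θ hθ).trans (by simp)
  · exact (hK₂ θ hθ).trans (by simp)

lemma F2fn_eq (hθ : θ ∈ Ioo 0 π) (a b : ℝ) :
    F2fn a b θ = -liouvilleCorrection (a ^ 2 - 1 / 4) (b ^ 2 - 1 / 4) θ -
      (a ^ 2 - 1 / 4) / (2 * θ) := by
  have hsin := (sin_half_pos hθ).ne'
  have hcos := (cos_half_pos (Ioo_subset_Ico_self hθ)).ne'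
  have hθ0 := hθ.1.ne'
  have hcot : cos θ / sin θ = (cot (θ / 2) - tan (θ / 2)) / 2 := by
    rw [cot_eq_cos_div_sin, tan_eq_sin_div_cos, ← mul_div_cancel₀ θ two_ne_zero, mul_div_assoc,
      cos_two_mul', sin_two_mul]
    field_simp
  rw [F2fn, liouvilleCorrection, logDeriv_sinc ⟨by linarith [hθ.1], by linarith [hθ.1, hθ.2]⟩, hcot]
  field_simp
  ring

end LiouvilleCorrection

/-! ### The Jacobi equation as a perturbed Bessel equation -/

section LiouvilleRiccati

variable {a b θ : ℝ}

lemma liouvilleCorrection_eq (hθ : θ ∈ Ioo 0 π) (μ ν : ℝ) :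
    liouvilleCorrection μ ν θ = μ / 4 * (cot (θ / 2) - 2 / θ) - ν / 4 * tan (θ / 2) := by
  rw [liouvilleCorrection, logDeriv_sinc ⟨by linarith [hθ.1], by linarith [hθ.1, hθ.2]⟩,
    one_div_div]

lemma deriv_liouvilleCorrection (hθ : θ ∈ Ioo 0 π) (μ ν : ℝ) :
    deriv (liouvilleCorrection μ ν) θ =
      μ / 8 * (4 / θ ^ 2 - (1 + cot (θ / 2) ^ 2)) - ν / 8 * (1 + tan (θ / 2) ^ 2) := by
  have hsin := (sin_half_pos hθ).ne'
  have hcos := (cos_half_pos (Ioo_subset_Ico_self hθ)).ne'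
  have hcot : 1 / sin (θ / 2) ^ 2 = 1 + cot (θ / 2) ^ 2 := by
    rw [cot_eq_cos_div_sin]
    field_simp
    rw [sin_sq_add_cos_sq]
  rw [(hasDerivAt_liouvilleCorrection hθ).deriv, hcot, one_div (_ ^ 2), ← inv_one_add_tan_sq hcos,
    inv_inv]

lemma cot_half_mul_tan_half (hθ : θ ∈ Ioo 0 π) : cot (θ / 2) * tan (θ / 2) = 1 := by
  have hsin := (sin_half_pos hθ).ne'
  have hcos := (cos_half_pos (Ioo_subset_Ico_self hθ)).ne'
  rw [cot_eq_cos_div_sin, tan_eq_sin_div_cos]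
  field_simp

lemma liouvilleCorrection_riccati (hθ : θ ∈ Ioo 0 π) (a b : ℝ) :
    deriv (liouvilleCorrection (2 * a + 1) (2 * b + 1)) θ +
        liouvilleCorrection (2 * a + 1) (2 * b + 1) θ ^ 2 +
        (2 * a + 1) / θ * liouvilleCorrection (2 * a + 1) (2 * b + 1) θ =
      -2 * deriv (liouvilleCorrection (a ^ 2 - 1 / 4) (b ^ 2 - 1 / 4)) θ -
        ((a + b + 1) / 2) ^ 2 := by
  rw [deriv_liouvilleCorrection hθ, deriv_liouvilleCorrection hθ, liouvilleCorrection_eq hθ]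
  linear_combination (-(2 * a + 1) * (2 * b + 1) / 8) * cot_half_mul_tan_half hθ

lemma liouvilleCorrection_mul_sin (hθ : θ ∈ Ioo 0 π) (a b : ℝ) :
    (2 * liouvilleCorrection (2 * a + 1) (2 * b + 1) θ + (2 * a + 1) / θ) * sin θ =
      a - b + (a + b + 1) * cos θ := by
  have hsin := (sin_half_pos hθ).ne'
  have hcos := (cos_half_pos (Ioo_subset_Ico_self hθ)).ne'
  have hsin_eq : sin θ = 2 * sin (θ / 2) * cos (θ / 2) := by
    rw [← sin_two_mul, mul_div_cancel₀ θ two_ne_zero]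
  have hcos_eq : cos θ = cos (θ / 2) ^ 2 - sin (θ / 2) ^ 2 := by
    rw [← cos_two_mul', mul_div_cancel₀ θ two_ne_zero]
  rw [liouvilleCorrection_eq hθ, hsin_eq, hcos_eq, cot_eq_cos_div_sin, tan_eq_sin_div_cos]
  have hθ0 := hθ.1.ne'
  field_simp
  linear_combination 4 * θ * (a - b) * sin_sq_add_cos_sq (θ / 2)

end LiouvilleRiccati

/-- The weight that, after division by `θ ^ (a + 1 / 2)`, brings the Jacobi equation in the variable
`θ = arccos x` to Liouville normal form; it is normalised to be `1` at `θ = 0`. -/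
noncomputable def liouvilleWeight (a b θ : ℝ) : ℝ :=
  sinc (θ / 2) ^ (a + 1 / 2) * cos (θ / 2) ^ (b + 1 / 2)

/-- `P_n^{(a,b)}(cos θ) / P_n^{(a,b)}(1)` multiplied by the Liouville weight. -/
noncomputable def liouvilleJacobi (a b : ℝ) (n : ℕ) (θ : ℝ) : ℝ :=
  liouvilleWeight a b θ * (jacobiP a b n (cos θ) / jacobiP a b n 1)

/-- The derivative of `liouvilleJacobi a b n` on `(0, π)`. -/
noncomputable def liouvilleJacobiDeriv (a b : ℝ) (n : ℕ) (θ : ℝ) : ℝ :=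
  liouvilleWeight a b θ *
    (liouvilleCorrection (2 * a + 1) (2 * b + 1) θ * (jacobiP a b n (cos θ) / jacobiP a b n 1) +
      deriv (jacobiP a b n) (cos θ) * -sin θ / jacobiP a b n 1)

section LiouvilleJacobi

variable {a b θ : ℝ} {n : ℕ}

lemma liouvilleWeight_zero (a b : ℝ) : liouvilleWeight a b 0 = 1 := by
  simp [liouvilleWeight]

lemma hasDerivAt_liouvilleWeight (hθ : θ ∈ Ico 0 π) :
    HasDerivAt (liouvilleWeight a b)
      (liouvilleWeight a b θ * liouvilleCorrection (2 * a + 1) (2 * b + 1) θ) θ := by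
  have hhalf : HasDerivAt (fun θ : ℝ => θ / 2) (1 / 2) θ := (hasDerivAt_id θ).div_const 2
  have hsinc := sinc_pos (x := θ / 2) ⟨by linarith [hθ.1], by linarith [hθ.1, hθ.2]⟩
  have hcos := cos_half_pos hθ
  have hsinc' := (HasDerivAt.comp θ (analyticAt_sinc (θ / 2)).differentiableAt.hasDerivAt
    hhalf).rpow_const (p := a + 1 / 2) (Or.inl hsinc.ne')
  have hcos' := ((hasDerivAt_cos (θ / 2)).comp θ hhalf).rpow_const (p := b + 1 / 2)
    (Or.inl hcos.ne')
  refine (hsinc'.fun_mul hcos').congr_deriv ?_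
  simp only [Function.comp_apply, liouvilleWeight, liouvilleCorrection, logDeriv_apply,
    tan_eq_sin_div_cos, rpow_sub_one hsinc.ne', rpow_sub_one hcos.ne']
  field_simp
  ring

lemma hasDerivAt_jacobiP_comp_cos (a b : ℝ) (n : ℕ) (θ : ℝ) :
    HasDerivAt (fun θ => jacobiP a b n (cos θ)) (deriv (jacobiP a b n) (cos θ) * -sin θ) θ :=
  (((contDiff_jacobiP a b n).differentiable (by simp)) (cos θ)).hasDerivAt.comp θ
    (hasDerivAt_cos θ)

lemma hasDerivAt_deriv_jacobiP_comp_cos (ha : -1 < a) (hb : -1 < b) (hθ : θ ∈ Ioo 0 π) :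
    HasDerivAt (fun θ => deriv (jacobiP a b n) (cos θ) * -sin θ)
      (-(2 * liouvilleCorrection (2 * a + 1) (2 * b + 1) θ + (2 * a + 1) / θ) *
          (deriv (jacobiP a b n) (cos θ) * -sin θ) -
        n * (n + a + b + 1) * jacobiP a b n (cos θ)) θ := by
  have hdiff : Differentiable ℝ (deriv (jacobiP a b n)) :=
    ((contDiff_jacobiP a b n).of_le (m := 2) le_top).differentiable_deriv_two
  refine (((hdiff (cos θ)).hasDerivAt.comp θ (hasDerivAt_cos θ)).fun_mul
    (hasDerivAt_sin θ).fun_neg).congr_deriv ?_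
  simp only [Function.comp_apply]
  linear_combination jacobiP_ode ha hb n (cos θ) +
    deriv (deriv (jacobiP a b n)) (cos θ) * sin_sq θ -
    deriv (jacobiP a b n) (cos θ) * liouvilleCorrection_mul_sin hθ a b

lemma hasDerivAt_liouvilleJacobi (hθ : θ ∈ Ico 0 π) :
    HasDerivAt (liouvilleJacobi a b n) (liouvilleJacobiDeriv a b n θ) θ :=
  ((hasDerivAt_liouvilleWeight hθ).fun_mul
    ((hasDerivAt_jacobiP_comp_cos a b n θ).div_const _)).congr_deriv
      (by rw [liouvilleJacobiDeriv]; ring)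

lemma hasDerivAt_liouvilleJacobiDeriv (ha : -1 < a) (hb : -1 < b) (hθ : θ ∈ Ioo 0 π) :
    HasDerivAt (liouvilleJacobiDeriv a b n)
      (-(2 * (a + 1 / 2) / θ) * liouvilleJacobiDeriv a b n θ -
        ((n + (a + b + 1) / 2) ^ 2 +
          2 * deriv (liouvilleCorrection (a ^ 2 - 1 / 4) (b ^ 2 - 1 / 4)) θ) *
            liouvilleJacobi a b n θ) θ := by
  have hθ' := Ioo_subset_Ico_self hθ
  refine ((hasDerivAt_liouvilleWeight hθ').fun_mul
    (((analyticAt_liouvilleCorrection hθ').differentiableAt.hasDerivAt.fun_mul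
      ((hasDerivAt_jacobiP_comp_cos a b n θ).div_const (jacobiP a b n 1))).fun_add
        ((hasDerivAt_deriv_jacobiP_comp_cos ha hb hθ).div_const (jacobiP a b n 1)))).congr_deriv ?_
  rw [liouvilleJacobiDeriv, liouvilleJacobi]
  linear_combination liouvilleWeight a b θ * (jacobiP a b n (cos θ) / jacobiP a b n 1) *
    liouvilleCorrection_riccati hθ a b

lemma jacobiP_one_pos (ha : -1 < a) (hb : -1 < b) (n : ℕ) : 0 < jacobiP a b n 1 := by
  have hΓ := Gamma_pos_of_pos (s := n + a + 1) (by linarith [n.cast_nonneg (α := ℝ)])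
  have hΓ' := Gamma_pos_of_pos (s := a + 1) (by linarith)
  rw [jacobiP_one hb]
  positivity

lemma tendsto_liouvilleJacobi (ha : -1 < a) (hb : -1 < b) (n : ℕ) :
    Tendsto (liouvilleJacobi a b n) (𝓝 0) (𝓝 1) := by
  have h := (hasDerivAt_liouvilleJacobi (a := a) (b := b) (n := n)
    ⟨le_rfl, pi_pos⟩).continuousAt.tendsto
  simpa [liouvilleJacobi, liouvilleWeight_zero, (jacobiP_one_pos ha hb n).ne'] using h

lemma tendsto_liouvilleJacobiDeriv (a b : ℝ) (n : ℕ) :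
    Tendsto (liouvilleJacobiDeriv a b n) (𝓝 0) (𝓝 0) := by
  have hzero : (0 : ℝ) ∈ Ico 0 π := ⟨le_rfl, pi_pos⟩
  have hweight := (hasDerivAt_liouvilleWeight (a := a) (b := b) hzero).continuousAt
  have hcorr := (analyticAt_liouvilleCorrection (μ := 2 * a + 1) (ν := 2 * b + 1)
    hzero).continuousAt
  have hP := (hasDerivAt_jacobiP_comp_cos a b n 0).continuousAt
  have hP' : Continuous fun θ => deriv (jacobiP a b n) (cos θ) * -sin θ :=
    (((contDiff_jacobiP a b n).continuous_deriv le_top).comp continuous_cos).mul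
      continuous_sin.neg
  have h : ContinuousAt (liouvilleJacobiDeriv a b n) 0 :=
    hweight.mul ((hcorr.mul (hP.div_const _)).add (hP'.continuousAt.div_const _))
  simpa [liouvilleJacobiDeriv, liouvilleCorrection_zero] using h.tendsto

end LiouvilleJacobi

section Rescaling

variable {a b δ N : ℝ}

lemma tendsto_div_nhdsGT_zero (N : ℝ) : Tendsto (fun z : ℝ => z / N) (𝓝[>] 0) (𝓝 0) := by
  simpa using (tendsto_id (α := ℝ) (x := 𝓝 0)).div_const N |>.mono_left nhdsWithin_le_nhds

lemma div_mem_Ioo (hδ : δ < π) (hN : 0 < N) {z : ℝ} (hz : z ∈ Ioc 0 (δ * N)) :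
    z / N ∈ Ioo 0 π :=
  ⟨div_pos hz.1 hN, ((div_le_iff₀ hN).2 hz.2).trans_lt hδ⟩

lemma hasDerivAt_comp_div_const {f : ℝ → ℝ} {f' z : ℝ} (hf : HasDerivAt f f' (z / N)) :
    HasDerivAt (fun z => f (z / N)) (f' / N) z :=
  (HasDerivAt.comp z hf ((hasDerivAt_id z).div_const N)).congr_deriv (by ring)

theorem isPerturbedBessel_liouvilleJacobi (ha : -1 < a) (hb : -1 < b) (hδ : δ < π) {n : ℕ}
    (hN : 0 < N) (hNn : N = n + (a + b + 1) / 2) :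
    IsPerturbedBessel a (δ * N)
      (fun z => 2 * (deriv (liouvilleCorrection (a ^ 2 - 1 / 4) (b ^ 2 - 1 / 4)) (z / N) / N ^ 2))
      (fun z => liouvilleJacobi a b n (z / N))
      (fun z => liouvilleJacobiDeriv a b n (z / N) / N) where
  hasDerivAt z hz :=
    hasDerivAt_comp_div_const (hasDerivAt_liouvilleJacobi (Ioo_subset_Ico_self
      (div_mem_Ioo hδ hN hz)))
  hasDerivAt_deriv z hz := by
    refine ((hasDerivAt_comp_div_const (hasDerivAt_liouvilleJacobiDeriv ha hb
      (div_mem_Ioo hδ hN hz))).div_const N).congr_deriv ?_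
    rw [← hNn]
    have hz0 := hz.1.ne'
    field_simp
  tendsto_one := (tendsto_liouvilleJacobi ha hb n).comp (tendsto_div_nhdsGT_zero N)
  tendsto_deriv_zero := by
    simpa using ((tendsto_liouvilleJacobiDeriv a b n).comp (tendsto_div_nhdsGT_zero N)).div_const N

theorem exists_isSlowModulation_liouvilleCorrection (μ ν : ℝ) (hδ : δ < π) :
    ∃ K, 0 ≤ K ∧ ∀ ⦃N : ℝ⦄, 0 < N → IsSlowModulation K N (δ * N)
      (fun z => liouvilleCorrection μ ν (z / N) / N)
      (fun z => deriv (liouvilleCorrection μ ν) (z / N) / N ^ 2)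
      (fun z => deriv (deriv (liouvilleCorrection μ ν)) (z / N) / N ^ 3) := by
  obtain ⟨K, hK, hbound⟩ := exists_abs_liouvilleCorrection_le μ ν hδ
  refine ⟨K, hK, fun N hN => ?_⟩
  have hanalytic (z : ℝ) (hz : z ∈ Ioc 0 (δ * N)) :
      AnalyticAt ℝ (liouvilleCorrection μ ν) (z / N) :=
    analyticAt_liouvilleCorrection (Ioo_subset_Ico_self (div_mem_Ioo hδ hN hz))
  have hbound' (z : ℝ) (hz : z ∈ Ioc 0 (δ * N)) :=
    hbound (z / N) ⟨(div_pos hz.1 hN).le, (div_le_iff₀ hN).2 hz.2⟩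
  refine ⟨fun z hz => ?_, fun z hz => ?_, fun z hz => ?_, fun z hz => ?_, fun z hz => ?_⟩
  · exact ((hasDerivAt_comp_div_const (hanalytic z hz).differentiableAt.hasDerivAt).div_const
      N).congr_deriv (by ring)
  · exact ((hasDerivAt_comp_div_const (hanalytic z hz).deriv.differentiableAt.hasDerivAt).div_const
      (N ^ 2)).congr_deriv (by ring)
  · rw [abs_div, abs_of_pos hN, show K * z / N ^ 2 = K * (z / N) / N by ring]
    gcongr
    exact (hbound' z hz).1
  · rw [abs_div, abs_of_pos (pow_pos hN 2)]
    gcongr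
    exact (hbound' z hz).2.1
  · rw [abs_div, abs_of_pos (pow_pos hN 3)]
    gcongr
    exact (hbound' z hz).2.2

end Rescaling

/-! ### A ratio of Gamma functions -/

section Telescoping

variable {f g : ℕ → ℝ} {n₀ : ℕ}

lemma le_of_tendsto_zero_of_sub_le_sub (hf : Tendsto f atTop (𝓝 0)) (hg : Tendsto g atTop (𝓝 0))
    (h : ∀ n ≥ n₀, f n - f (n + 1) ≤ g n - g (n + 1)) : ∀ n ≥ n₀, f n ≤ g n := by
  intro n hn
  have hmono : MonotoneOn (fun k => f k - g k) {k | n₀ ≤ k} :=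
    monotoneOn_nat_Ici_of_le_succ fun k hk => by linarith [h k hk]
  have hlim : Tendsto (fun k => f k - g k) atTop (𝓝 0) := by simpa using hf.sub hg
  have hle : f n - g n ≤ 0 := ge_of_tendsto hlim <| by
    filter_upwards [eventually_ge_atTop n] with k hk using hmono hn (hn.trans hk) hk
  linarith

lemma inv_cube_le_two_mul_sub {x : ℝ} (hx : 1 ≤ x) :
    (x ^ 3)⁻¹ ≤ 2 * (x ^ 2)⁻¹ - 2 * ((x + 1) ^ 2)⁻¹ := by
  rw [← sub_nonneg]
  have heq : 2 * (x ^ 2)⁻¹ - 2 * ((x + 1) ^ 2)⁻¹ - (x ^ 3)⁻¹ =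
      (3 * x ^ 2 - 1) / (x ^ 3 * (x + 1) ^ 2) := by
    field_simp
    ring
  rw [heq]
  exact div_nonneg (by nlinarith) (by positivity)

lemma isBigO_inv_sq_of_sub_isBigO_inv_cube (hf : Tendsto f atTop (𝓝 0))
    (h : (fun n => f (n + 1) - f n) =O[atTop] fun n : ℕ => ((n : ℝ) ^ 3)⁻¹) :
    f =O[atTop] fun n : ℕ => ((n : ℝ) ^ 2)⁻¹ := by
  obtain ⟨C, hC, hbound⟩ := h.exists_pos
  obtain ⟨n₀, hn₀⟩ := eventually_atTop.1 (hbound.bound.and (eventually_ge_atTop 1))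
  have hlim : Tendsto (fun n : ℕ => 2 * C * ((n : ℝ) ^ 2)⁻¹) atTop (𝓝 0) := by
    simpa using (((tendsto_pow_atTop two_ne_zero).comp
      (tendsto_natCast_atTop_atTop (R := ℝ))).inv_tendsto_atTop).const_mul (2 * C)
  have hstep (n : ℕ) (hn : n ≥ n₀) : |f (n + 1) - f n| ≤
      2 * C * ((n : ℝ) ^ 2)⁻¹ - 2 * C * (((n + 1 : ℕ) : ℝ) ^ 2)⁻¹ := by
    obtain ⟨hle, hn1⟩ := hn₀ n hn
    rw [norm_of_nonneg (by positivity : (0 : ℝ) ≤ ((n : ℝ) ^ 3)⁻¹)] at hle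
    refine hle.trans ?_
    have := mul_le_mul_of_nonneg_left (inv_cube_le_two_mul_sub (Nat.one_le_cast.2 hn1)) hC.le
    push_cast
    linarith
  refine .of_bound (2 * C) (eventually_atTop.2 ⟨n₀, fun n hn => ?_⟩)
  rw [norm_of_nonneg (by positivity : (0 : ℝ) ≤ ((n : ℝ) ^ 2)⁻¹)]
  refine abs_le'.2 ⟨?_, ?_⟩
  · exact le_of_tendsto_zero_of_sub_le_sub hf hlim
      (fun k hk => by linarith [neg_le_of_abs_le (hstep k hk)]) n hn
  · exact le_of_tendsto_zero_of_sub_le_sub (f := fun k => -f k) (by simpa using hf.neg) hlim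
      (fun k hk => by simpa [neg_add_eq_sub] using le_of_abs_le (hstep k hk)) n hn

end Telescoping

lemma abs_log_one_add_sub_log_one_sub_le {x : ℝ} (hx : |x| ≤ 1 / 2) :
    |log (1 + x) - log (1 - x) - 2 * x| ≤ 4 * |x| ^ 3 := by
  have hpos := abs_log_sub_add_sum_range_le (x := x) (by linarith) 2
  have hneg := abs_log_sub_add_sum_range_le (x := -x) (by rw [abs_neg]; linarith) 2
  have hdiv : |x| ^ 3 / (1 - |x|) ≤ 2 * |x| ^ 3 := by
    rw [div_le_iff₀ (by linarith)]
    nlinarith [pow_nonneg (abs_nonneg x) 3]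
  simp only [Finset.sum_range_succ, Finset.sum_range_zero, abs_neg, sub_neg_eq_add] at hpos hneg
  norm_num at hpos hneg
  calc |log (1 + x) - log (1 - x) - 2 * x|
      = |(-x + x ^ 2 / 2 + log (1 + x)) - (x + x ^ 2 / 2 + log (1 - x))| := by ring_nf
    _ ≤ 2 * |x| ^ 3 + 2 * |x| ^ 3 :=
        (abs_sub _ _).trans (add_le_add (hneg.trans hdiv) (hpos.trans hdiv))
    _ = 4 * |x| ^ 3 := by ring

lemma log_add_sub_log_sub_isBigO (t : ℝ) :
    (fun M => log (M + t) - log (M - t) - 2 * t / M) =O[atTop] fun M => (M ^ 3)⁻¹ := by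
  refine .of_bound (4 * |t| ^ 3) ?_
  filter_upwards [eventually_gt_atTop 0, eventually_ge_atTop (2 * |t|)] with M hM hMt
  have hx : |t / M| ≤ 1 / 2 := by
    rw [abs_div, abs_of_pos hM, div_le_iff₀ hM]
    linarith
  have hx' := abs_le.1 hx
  have hlog (s : ℝ) (hs : 0 < 1 + s / M) : log (M + s) = log M + log (1 + s / M) := by
    rw [← log_mul hM.ne' hs.ne', mul_add, mul_one, mul_div_cancel₀ _ hM.ne']
  have hadd := hlog t (by linarith)
  have hsub := hlog (-t) (by rw [neg_div]; linarith)
  rw [← sub_eq_add_neg, neg_div, ← sub_eq_add_neg] at hsub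
  calc ‖log (M + t) - log (M - t) - 2 * t / M‖
      = |log (1 + t / M) - log (1 - t / M) - 2 * (t / M)| := by
        rw [hadd, hsub, Real.norm_eq_abs]
        ring_nf
    _ ≤ 4 * |t / M| ^ 3 := abs_log_one_add_sub_log_one_sub_le hx
    _ = 4 * |t| ^ 3 * ‖(M ^ 3)⁻¹‖ := by
        rw [norm_of_nonneg (by positivity), abs_div, abs_of_pos hM]
        ring

section LogGamma

variable {s : ℝ}

lemma log_Gamma_add_one (hs : 0 < s) : log (Gamma (s + 1)) = log (Gamma s) + log s := by
  rw [Gamma_add_one hs.ne', log_mul hs.ne' (Gamma_pos_of_pos hs).ne', add_comm]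

lemma tendsto_log_natCast_add_sub_log (s : ℝ) :
    Tendsto (fun n : ℕ => log (n + s) - log n) atTop (𝓝 0) :=
  (tendsto_log_comp_add_sub_log s).comp tendsto_natCast_atTop_atTop

lemma tendsto_log_Gamma_natCast_add (hs : 0 < s) :
    Tendsto (fun n : ℕ => log (Gamma (n + s)) - (s - 1) * log n - log (n.factorial : ℝ))
      atTop (𝓝 0) := by
  have h := ((BohrMollerup.tendsto_log_gamma hs).const_sub (log (Gamma s))).sub
    (tendsto_log_natCast_add_sub_log s)
  rw [sub_self, sub_zero] at h
  refine h.congr fun n => ?_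
  have hsum := BohrMollerup.f_add_nat_eq (f := fun s => log (Gamma s)) log_Gamma_add_one hs n
  rw [BohrMollerup.logGammaSeq, Finset.sum_range_succ, add_comm (n : ℝ) s]
  linarith

end LogGamma

/-- The ratio `Γ(n+a+b+1) Γ(n+a+1) / (Γ(n+b+1) Γ(n+1))`, divided by its leading asymptotics
`N ^ (2 a)` for `N = n + (a+b+1)/2`. -/
noncomputable def gammaRatio (a b : ℝ) (n : ℕ) : ℝ :=
  Gamma (n + a + b + 1) * Gamma (n + a + 1) / (Gamma (n + b + 1) * Gamma (n + 1)) /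
    (n + (a + b + 1) / 2) ^ (2 * a)

section GammaRatio

variable {a b : ℝ}

lemma log_gammaRatio (ha : -1 < a) (hb : -1 < b) (hab : -1 < a + b) (n : ℕ) :
    log (gammaRatio a b n) = log (Gamma (n + a + b + 1)) + log (Gamma (n + a + 1)) -
      (log (Gamma (n + b + 1)) + log (Gamma (n + 1))) - 2 * a * log (n + (a + b + 1) / 2) := by
  have h₁ := Gamma_pos_of_pos (s := n + a + b + 1) (by linarith)
  have h₂ := Gamma_pos_of_pos (s := n + a + 1) (by linarith)
  have h₃ := Gamma_pos_of_pos (s := n + b + 1) (by linarith)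
  have h₄ := Gamma_pos_of_pos (s := n + 1) (by linarith)
  have hN : (0 : ℝ) < n + (a + b + 1) / 2 := by linarith
  rw [gammaRatio, log_div (by positivity) (by positivity), log_div (by positivity) (by positivity),
    log_mul h₁.ne' h₂.ne', log_mul h₃.ne' h₄.ne', log_rpow hN]

lemma gammaRatio_pos (ha : -1 < a) (hb : -1 < b) (hab : -1 < a + b) (n : ℕ) :
    0 < gammaRatio a b n := by
  have h₁ := Gamma_pos_of_pos (s := n + a + b + 1) (by linarith)
  have h₂ := Gamma_pos_of_pos (s := n + a + 1) (by linarith)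
  have h₃ := Gamma_pos_of_pos (s := n + b + 1) (by linarith)
  have hN : (0 : ℝ) < n + (a + b + 1) / 2 := by linarith
  rw [gammaRatio]
  positivity

lemma tendsto_log_gammaRatio (ha : -1 < a) (hb : -1 < b) (hab : -1 < a + b) :
    Tendsto (fun n => log (gammaRatio a b n)) atTop (𝓝 0) := by
  have h := (((tendsto_log_Gamma_natCast_add (s := a + b + 1) (by linarith)).add
    (tendsto_log_Gamma_natCast_add (s := a + 1) (by linarith))).sub
    (tendsto_log_Gamma_natCast_add (s := b + 1) (by linarith))).sub
    ((tendsto_log_natCast_add_sub_log ((a + b + 1) / 2)).const_mul (2 * a))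
  rw [add_zero, sub_zero, mul_zero, sub_zero] at h
  refine h.congr fun n => ?_
  rw [log_gammaRatio ha hb hab, Gamma_nat_eq_factorial]
  simp only [← add_assoc]
  ring

/- The first-order terms cancel because `(a + b) / 2 + (a - b) / 2 = 2 * a * (1 / 2)`. -/
lemma log_gammaRatio_succ_sub (ha : -1 < a) (hb : -1 < b) (hab : -1 < a + b) (n : ℕ) :
    letI M : ℝ := n + (a + b + 2) / 2
    letI defect (t : ℝ) : ℝ := log (M + t) - log (M - t) - 2 * t / M
    log (gammaRatio a b (n + 1)) - log (gammaRatio a b n) =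
      defect ((a + b) / 2) + defect ((a - b) / 2) - 2 * a * defect (1 / 2) := by
  set M : ℝ := n + (a + b + 2) / 2 with hM
  have hΓ (c : ℝ) (hc : 0 < n + c + 1) :
      log (Gamma ((n + 1 : ℕ) + c + 1)) = log (Gamma (n + c + 1)) + log (n + c + 1) := by
    rw [← log_Gamma_add_one hc]
    push_cast
    ring_nf
  have hab' := hΓ (a + b) (by linarith)
  have h0 := hΓ 0 (by linarith)
  rw [← add_assoc, ← add_assoc] at hab'
  rw [add_zero, add_zero] at h0
  rw [log_gammaRatio ha hb hab, log_gammaRatio ha hb hab, hab', hΓ a (by linarith),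
    hΓ b (by linarith), h0]
  simp only [show M + (a + b) / 2 = n + a + b + 1 by ring,
    show M - (a + b) / 2 = n + 1 by ring, show M + (a - b) / 2 = n + a + 1 by ring,
    show M - (a - b) / 2 = n + b + 1 by ring, show M - 1 / 2 = n + (a + b + 1) / 2 by ring,
    show M + 1 / 2 = (n + 1 : ℕ) + (a + b + 1) / 2 by rw [hM]; push_cast; ring]
  ring

lemma log_gammaRatio_succ_sub_isBigO (ha : -1 < a) (hb : -1 < b) (hab : -1 < a + b) :
    (fun n => log (gammaRatio a b (n + 1)) - log (gammaRatio a b n)) =O[atTop]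
      fun n : ℕ => ((n : ℝ) ^ 3)⁻¹ := by
  have hM : Tendsto (fun n : ℕ => (n : ℝ) + (a + b + 2) / 2) atTop atTop :=
    tendsto_atTop_add_const_right _ _ tendsto_natCast_atTop_atTop
  have hcube : (fun n : ℕ => (((n : ℝ) + (a + b + 2) / 2) ^ 3)⁻¹) =O[atTop]
      fun n : ℕ => ((n : ℝ) ^ 3)⁻¹ := by
    refine .of_norm_eventuallyLE ?_
    filter_upwards [eventually_gt_atTop 0] with n hn
    rw [norm_of_nonneg (by have : 0 < a + b + 2 := by linarith
                           positivity)]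
    gcongr
    linarith
  have hdefect (t : ℝ) := ((log_add_sub_log_sub_isBigO t).comp_tendsto hM).trans hcube
  exact (((hdefect _).add (hdefect _)).sub ((hdefect _).const_mul_left _)).congr_left
    fun n => (log_gammaRatio_succ_sub ha hb hab n).symm

theorem exists_abs_gammaRatio_sub_one_le (ha : -1 < a) (hb : -1 < b) (hab : -1 < a + b) :
    ∃ C, 0 < C ∧ ∀ n : ℕ, 1 ≤ n → |gammaRatio a b n - 1| ≤ C / (n : ℝ) ^ 2 := by
  have hlim := tendsto_log_gammaRatio ha hb hab
  have hexp : (fun n => gammaRatio a b n - 1) =O[atTop] fun n => log (gammaRatio a b n) := by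
    refine ((hasDerivAt_exp 0).isBigO_sub.comp_tendsto hlim).congr (fun n => ?_) fun n => ?_
    · simp [exp_log (gammaRatio_pos ha hb hab n)]
    · simp
  have hO := hexp.trans (isBigO_inv_sq_of_sub_isBigO_inv_cube hlim
    (log_gammaRatio_succ_sub_isBigO ha hb hab))
  obtain ⟨C, hC, hbound⟩ := Asymptotics.bound_of_isBigO_nat_atTop hO
  refine ⟨C, hC, fun n hn => ?_⟩
  have h := hbound (x := n) (by positivity)
  rwa [norm_of_nonneg (by positivity : (0 : ℝ) ≤ ((n : ℝ) ^ 2)⁻¹), ← div_eq_mul_inv] at h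

end GammaRatio

/-! ### Two-term asymptotics -/

/-- The two-term oscillating factor of the asymptotics of `P_n^{(a,b)}(cos θ)`, where
`N = n + (a+b+1)/2`. -/
noncomputable def twoTermJacobi (a b N θ : ℝ) : ℝ :=
  cos (omegaA a (N * θ)) + N⁻¹ * F2fn a b θ * cos (omegaA (a + 1) (N * θ))

section TwoTermJacobi

variable {a b δ θ N : ℝ}

lemma twoTermJacobi_eq (hN : N ≠ 0) (hθ : θ ∈ Ioo 0 π) (a b : ℝ) :
    twoTermJacobi a b N θ = cos (N * θ - (a + 1 / 2) * π / 2) -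
      (liouvilleCorrection (a ^ 2 - 1 / 4) (b ^ 2 - 1 / 4) θ / N +
        (a ^ 2 - 1 / 4) / (2 * (N * θ))) * sin (N * θ - (a + 1 / 2) * π / 2) := by
  have hω : omegaA a (N * θ) = N * θ - (a + 1 / 2) * π / 2 := by
    rw [omegaA]
    ring
  have hω' : cos (omegaA (a + 1) (N * θ)) = sin (N * θ - (a + 1 / 2) * π / 2) := by
    rw [← cos_sub_pi_div_two, omegaA]
    ring_nf
  rw [twoTermJacobi, hω, hω', F2fn_eq hθ]
  have hθ0 := hθ.1.ne'
  field_simp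
  ring

lemma exists_abs_twoTermJacobi_le (a b : ℝ) (hδ : δ < π) :
    ∃ C, 0 ≤ C ∧ ∀ ⦃N θ : ℝ⦄, 1 ≤ N → θ ∈ Ioc 0 δ → 1 ≤ N * θ → |twoTermJacobi a b N θ| ≤ C := by
  set m := a ^ 2 - 1 / 4
  obtain ⟨K, hK, hbound⟩ := exists_abs_liouvilleCorrection_le m (b ^ 2 - 1 / 4) hδ
  refine ⟨1 + (K * π + |m|), by positivity, fun N θ hN hθ hz => ?_⟩
  have hB := (hbound θ (Ioc_subset_Icc_self hθ)).1
  rw [twoTermJacobi_eq (by linarith) ⟨hθ.1, hθ.2.trans_lt hδ⟩]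
  set ω := N * θ - (a + 1 / 2) * π / 2
  set B := liouvilleCorrection m (b ^ 2 - 1 / 4) θ
  have hBN : |B / N| ≤ K * π := by
    rw [abs_div, abs_of_pos (by linarith : 0 < N)]
    exact (div_le_self (abs_nonneg _) hN).trans (hB.trans (by gcongr; exact hθ.2.trans hδ.le))
  have hmz : |m / (2 * (N * θ))| ≤ |m| := by
    rw [abs_div, abs_of_pos (by linarith : 0 < 2 * (N * θ))]
    exact div_le_self (abs_nonneg _) (by linarith)
  calc |cos ω - (B / N + m / (2 * (N * θ))) * sin ω|
      ≤ |cos ω| + |B / N + m / (2 * (N * θ))| * |sin ω| :=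
        (abs_sub _ _).trans_eq (by rw [abs_mul])
    _ ≤ 1 + (K * π + |m|) * 1 := by
        gcongr
        exacts [abs_cos_le_one ω, (abs_add_le _ _).trans (add_le_add hBN hmz), abs_sin_le_one ω]
    _ = 1 + (K * π + |m|) := by rw [mul_one]

theorem exists_abs_liouvilleJacobi_sub_twoTermJacobi_le (ha : 1 / 2 < a) (hb : -1 < b)
    (hδ : δ ∈ Ico 0 π) :
    ∃ C, 0 ≤ C ∧ ∀ ⦃n : ℕ⦄ ⦃N θ : ℝ⦄, N = n + (a + b + 1) / 2 → 1 ≤ N → θ ∈ Ioc 0 δ →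
      1 ≤ N * θ → |(N * θ) ^ (a + 1 / 2) * liouvilleJacobi a b n θ -
        besselAmplitude a * twoTermJacobi a b N θ| ≤ C / (N * θ) ^ 2 := by
  obtain ⟨K, hK, hslow⟩ :=
    exists_isSlowModulation_liouvilleCorrection (a ^ 2 - 1 / 4) (b ^ 2 - 1 / 4) hδ.2
  obtain ⟨C, hC, hbound⟩ := exists_abs_rpow_mul_sub_le ha hK hδ.1
  refine ⟨C, hC, fun n N θ hNn hN hθ hz => ?_⟩
  have hN0 : 0 < N := by linarith
  have h := hbound hN le_rfl (hslow hN0)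
    (isPerturbedBessel_liouvilleJacobi (by linarith) hb hδ.2 hN0 hNn) (N * θ)
    ⟨hz, by rw [mul_comm]; exact mul_le_mul_of_nonneg_right hθ.2 hN0.le⟩
  rwa [mul_div_cancel_left₀ θ hN0.ne', ← twoTermJacobi_eq hN0.ne' ⟨hθ.1, hθ.2.trans_lt hδ.2⟩] at h

end TwoTermJacobi

section DirichletKernel

variable {a b δ θ : ℝ}

lemma mAB_pos (hθ : θ ∈ Ioo 0 π) (a b : ℝ) : 0 < mAB a b θ := by
  have hsin := sin_half_pos hθ
  have hcos := cos_half_pos (Ioo_subset_Ico_self hθ)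
  rw [mAB]
  positivity

lemma mAB_mul_liouvilleWeight (hθ : θ ∈ Ioo 0 π) (a b : ℝ) :
    mAB a b θ * (θ ^ (a + 1 / 2) * liouvilleWeight a b θ) = 2 ^ (a + 1 / 2) / √π := by
  have hsin := sin_half_pos hθ
  have hcos := cos_half_pos (Ioo_subset_Ico_self hθ)
  have hθ0 := hθ.1
  have hsinc : θ * sinc (θ / 2) = 2 * sin (θ / 2) := by
    rw [sinc_of_ne_zero (by positivity)]
    field_simp
  rw [liouvilleWeight, ← mul_assoc (θ ^ _),
    ← mul_rpow hθ0.le (sinc_pos ⟨by linarith, by linarith [hθ.2]⟩).le, hsinc,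
    mul_rpow zero_le_two hsin.le, mAB, show -a - 1 / 2 = -(a + 1 / 2) by ring,
    show -b - 1 / 2 = -(b + 1 / 2) by ring, rpow_neg pi_pos.le, rpow_neg hsin.le, rpow_neg hcos.le,
    sqrt_eq_rpow]
  field_simp

lemma gamma_div_mul_jacobiP_eq (ha : -1 < a) (hb : -1 < b) (hab : -1 < a + b) (n : ℕ)
    (hθ : θ ∈ Ioo 0 π) :
    letI N : ℝ := n + (a + b + 1) / 2
    Gamma (n + a + b + 1) / Gamma (n + b + 1) * jacobiP a b n (cos θ) =
      N ^ (a - 1 / 2) * mAB a b θ * (gammaRatio a b n *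
        ((N * θ) ^ (a + 1 / 2) * liouvilleJacobi a b n θ / besselAmplitude a)) := by
  set N : ℝ := n + (a + b + 1) / 2 with hNdef
  have hN : 0 < N := by linarith [n.cast_nonneg (α := ℝ)]
  have hΓ := Gamma_pos_of_pos (s := n + a + 1) (by linarith)
  have hΓa := Gamma_pos_of_pos (s := a + 1) (by linarith)
  have hΓb := Gamma_pos_of_pos (s := n + b + 1) (by linarith)
  have hpow : N ^ (a - 1 / 2) * N ^ (a + 1 / 2) = N ^ (2 * a) := by
    rw [← rpow_add hN]
    ring_nf
  have hweight := mAB_mul_liouvilleWeight hθ a b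
  symm
  calc N ^ (a - 1 / 2) * mAB a b θ * (gammaRatio a b n *
        ((N * θ) ^ (a + 1 / 2) * liouvilleJacobi a b n θ / besselAmplitude a))
      = gammaRatio a b n * (N ^ (a - 1 / 2) * N ^ (a + 1 / 2)) *
          (mAB a b θ * (θ ^ (a + 1 / 2) * liouvilleWeight a b θ)) / besselAmplitude a *
          (jacobiP a b n (cos θ) / jacobiP a b n 1) := by
        rw [liouvilleJacobi, mul_rpow hN.le hθ.1.le]
        ring
    _ = Gamma (n + a + b + 1) / Gamma (n + b + 1) * jacobiP a b n (cos θ) := by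
        rw [hpow, hweight, gammaRatio, ← hNdef, besselAmplitude, jacobiP_one hb,
          Gamma_nat_eq_factorial]
        field_simp

lemma dirichletJ_one_cos_eq (ha : -(1 / 2) < a) (hb : -1 < b) (hab : a + b ≠ -1) (n : ℕ)
    (hθ : θ ∈ Ioo 0 π) :
    letI N : ℝ := n + (a + b + 2) / 2
    dirichletJ a b n 1 (cos θ) =
      2 ^ (-(a + b + 1)) / Gamma (a + 1) * N ^ (a + 1 / 2) * mAB (a + 1) b θ *
        (gammaRatio (a + 1) b n * ((N * θ) ^ (a + 1 + 1 / 2) * liouvilleJacobi (a + 1) b n θ /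
          besselAmplitude (a + 1))) := by
  have h := gamma_div_mul_jacobiP_eq (a := a + 1) (by linarith) hb (by linarith) n hθ
  rw [show (n : ℝ) + (a + 1) + b + 1 = n + a + b + 2 by ring,
    show a + 1 + b + 1 = a + b + 2 by ring, show a + 1 - 1 / 2 = a + 1 / 2 by ring] at h
  rw [dirichletJ_one_eq (by linarith) hb hab, mul_assoc, h]
  ring

lemma abs_mul_sub_le (r x y : ℝ) : |r * x - y| ≤ |r| * |x - y| + |r - 1| * |y| := by
  rw [show r * x - y = r * (x - y) + (r - 1) * y by ring, ← abs_mul, ← abs_mul]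
  exact abs_add_le _ _

lemma exists_abs_gammaRatio_mul_sub_twoTermJacobi_le (ha : 1 / 2 < a) (hb : -1 < b)
    (hδ : δ ∈ Ico 0 π) :
    ∃ C, 0 < C ∧ ∀ ⦃n : ℕ⦄, 1 ≤ n → ∀ ⦃N : ℝ⦄, N = n + (a + b + 1) / 2 →
      ∀ θ ∈ Icc (1 / (n : ℝ)) δ,
        |gammaRatio a b n *
            ((N * θ) ^ (a + 1 / 2) * liouvilleJacobi a b n θ / besselAmplitude a) -
          twoTermJacobi a b N θ| ≤ C / (n * θ) ^ 2 := by
  obtain ⟨C₁, hC₁, hjacobi⟩ := exists_abs_liouvilleJacobi_sub_twoTermJacobi_le ha hb hδ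
  obtain ⟨C₂, hC₂, htwo⟩ := exists_abs_twoTermJacobi_le a b hδ.2
  obtain ⟨C₃, hC₃, hratio⟩ :=
    exists_abs_gammaRatio_sub_one_le (a := a) (b := b) (by linarith) hb (by linarith)
  have hκ := besselAmplitude_pos (a := a) (by linarith)
  refine ⟨(1 + C₃) * (C₁ / besselAmplitude a) + C₃ * C₂ * π ^ 2 + 1, by positivity,
    fun n hn N hN θ hθ => ?_⟩
  have hn1 : (1 : ℝ) ≤ n := Nat.one_le_cast.2 hn
  have hnN : n ≤ N := by linarith
  have hθ0 : 0 < θ := lt_of_lt_of_le (by positivity) hθ.1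
  have hnθ : 1 ≤ n * θ := (div_le_iff₀' (by linarith)).1 hθ.1
  have hnNθ : n * θ ≤ N * θ := by gcongr
  have hθδ : θ ∈ Ioc 0 δ := ⟨hθ0, hθ.2⟩
  have hY := hjacobi hN (hn1.trans hnN) hθδ (hnθ.trans hnNθ)
  have hS := htwo (hn1.trans hnN) hθδ (hnθ.trans hnNθ)
  set κ := besselAmplitude a
  set Y := (N * θ) ^ (a + 1 / 2) * liouvilleJacobi a b n θ
  set S := twoTermJacobi a b N θ
  set R := gammaRatio a b n
  have hR : |R| ≤ 1 + C₃ := by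
    have hC₃n : C₃ / (n : ℝ) ^ 2 ≤ C₃ := div_le_self hC₃.le (one_le_pow₀ hn1)
    linarith [abs_sub_abs_le_abs_sub R 1, abs_one (α := ℝ), hratio n hn]
  have hYS : |Y / κ - S| ≤ C₁ / κ / (n * θ) ^ 2 := by
    rw [show Y / κ - S = (Y - κ * S) / κ by field_simp, abs_div, abs_of_pos hκ, div_right_comm]
    gcongr
    exact hY.trans (by gcongr)
  have hn2 : C₃ / (n : ℝ) ^ 2 ≤ C₃ * π ^ 2 / (n * θ) ^ 2 := by
    rw [mul_pow, div_le_div_iff₀ (by positivity) (by positivity), mul_assoc, mul_comm (π ^ 2)]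
    gcongr
    exact hθ.2.trans hδ.2.le
  calc |R * (Y / κ) - S| ≤ |R| * |Y / κ - S| + |R - 1| * |S| := abs_mul_sub_le R (Y / κ) S
    _ ≤ (1 + C₃) * (C₁ / κ / (n * θ) ^ 2) + C₃ * π ^ 2 / (n * θ) ^ 2 * C₂ := by
        gcongr
        exact (hratio n hn).trans hn2
    _ = ((1 + C₃) * (C₁ / κ) + C₃ * C₂ * π ^ 2) / (n * θ) ^ 2 := by ring
    _ ≤ ((1 + C₃) * (C₁ / κ) + C₃ * C₂ * π ^ 2 + 1) / (n * θ) ^ 2 :=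
        div_le_div_of_nonneg_right (le_add_of_nonneg_right zero_le_one) (sq_nonneg _)

end DirichletKernel

theorem dirichletJ_two_term_asymptotics_left_general {α β δ : ℝ} (hα : -(1 / 2) < α)
    (hβ : -1 < β) (hαβ : α + β ≠ -1) (hδ : δ ∈ Ico 0 π) :
    ∃ C : ℝ, 0 < C ∧ ∀ L : ℕ, 1 ≤ L → ∀ θ ∈ Icc (1 / (L : ℝ)) δ,
      |dirichletJ α β L 1 (cos θ) -
          2 ^ (-(α + β + 1)) / Gamma (α + 1) * (L + (α + β + 2) / 2) ^ (α + 1 / 2) *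
            mAB (α + 1) β θ *
            (cos (omegaA (α + 1) ((L + (α + β + 2) / 2) * θ)) +
              (L + (α + β + 2) / 2 : ℝ)⁻¹ * F2fn (α + 1) β θ *
                cos (omegaA (α + 2) ((L + (α + β + 2) / 2) * θ)))| ≤
        C * (2 ^ (-(α + β + 1)) / Gamma (α + 1)) * (L + (α + β + 2) / 2) ^ (α + 1 / 2) *
          mAB (α + 1) β θ * ((L : ℝ) ^ (-2 : ℝ) * θ ^ (-2 : ℝ)) := by
  obtain ⟨C, hC, hbound⟩ :=
    exists_abs_gammaRatio_mul_sub_twoTermJacobi_le (a := α + 1) (by linarith) hβ hδ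
  refine ⟨C, hC, fun L hL θ hθ => ?_⟩
  have hL0 : (0 : ℝ) < L := Nat.cast_pos.2 hL
  have hθ0 : 0 < θ := lt_of_lt_of_le (by positivity) hθ.1
  have hθπ : θ ∈ Ioo 0 π := ⟨hθ0, hθ.2.trans_lt hδ.2⟩
  have hN0 : (0 : ℝ) < L + (α + β + 2) / 2 := by
    linarith [(Nat.one_le_cast.2 hL : (1 : ℝ) ≤ L)]
  have hΓ := Gamma_pos_of_pos (s := α + 1) (by linarith)
  have hm := mAB_pos hθπ (α + 1) β
  have hpow : C * ((L : ℝ) ^ (-2 : ℝ) * θ ^ (-2 : ℝ)) = C / (L * θ) ^ 2 := by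
    rw [← mul_rpow hL0.le hθ0.le, rpow_neg (by positivity), rpow_two, div_eq_mul_inv]
  have h := hbound hL (N := L + (α + β + 2) / 2) (by ring) θ hθ
  rw [twoTermJacobi, show α + 1 + 1 = α + 2 by ring] at h
  rw [dirichletJ_one_cos_eq hα hβ hαβ L hθπ, ← mul_sub, abs_mul, abs_of_pos (by positivity),
    mul_assoc C, mul_assoc C, mul_assoc C, mul_left_comm C, hpow]
  gcongr

/-- Lemma 2.5 i): two-term asymptotics of the generalised Dirichlet kernel
`v_L^{(α,β)}(1,cos θ)` for `c⁽¹⁾/L ≤ θ ≤ π − ε`, with `L̃ = L + (α+β+2)/2`;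
here `c⁽¹⁾ = c⁽¹⁾(α,β) > 0` and `C = C(ε,α,β) > 0`. -/
theorem dirichletJ_two_term_asymptotics_left (α β : ℝ)
    (hα : -(1 / 2 : ℝ) < α) (hβ : -(1 / 2 : ℝ) < β) (hαβ : -5 < α - β) :
    ∃ c : ℝ, 0 < c ∧
      ∀ ε : ℝ, 0 < ε → ε < Real.pi / 2 →
        ∃ C : ℝ, 0 < C ∧
          ∀ L : ℕ, 1 ≤ L → ∀ θ : ℝ, c / (L : ℝ) ≤ θ → θ ≤ Real.pi - ε →
            |dirichletJ α β L 1 (Real.cos θ) -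
                (2 : ℝ) ^ (-(α + β + 1)) / Real.Gamma (α + 1) *
                  ((L : ℝ) + (α + β + 2) / 2) ^ (α + 1 / 2) * mAB (α + 1) β θ *
                    (Real.cos (omegaA (α + 1) (((L : ℝ) + (α + β + 2) / 2) * θ)) +
                      ((L : ℝ) + (α + β + 2) / 2)⁻¹ * F2fn (α + 1) β θ *
                        Real.cos (omegaA (α + 2) (((L : ℝ) + (α + β + 2) / 2) * θ)))| ≤
              C * ((2 : ℝ) ^ (-(α + β + 1)) / Real.Gamma (α + 1)) *
                ((L : ℝ) + (α + β + 2) / 2) ^ (α + 1 / 2) * mAB (α + 1) β θ *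
                  ((L : ℝ) ^ uHat (α + 1) * θ ^ nuHat (α + 1) +
                    (L : ℝ) ^ (-(2 : ℝ)) * θ ^ (-(2 : ℝ))) := by
  refine ⟨1, one_pos, fun ε hε hε2 => ?_⟩
  obtain ⟨C, hC, h⟩ := dirichletJ_two_term_asymptotics_left_general hα (by linarith)
    (by linarith : α + β ≠ -1) (δ := π - ε) ⟨by linarith [pi_pos], by linarith⟩
  refine ⟨C, hC, fun L hL θ hθ1 hθ2 => (h L hL θ ⟨hθ1, hθ2⟩).trans ?_⟩
  have hθ : 0 < θ := lt_of_lt_of_le (by positivity) hθ1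
  have hΓ := Gamma_pos_of_pos (s := α + 1) (by linarith)
  have hm := mAB_pos ⟨hθ, by linarith⟩ (α + 1) β
  have hN : (0 : ℝ) < L + (α + β + 2) / 2 := by
    linarith [(Nat.one_le_cast.2 hL : (1 : ℝ) ≤ L)]
  gcongr
  exact le_add_of_nonneg_left (by positivity)
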